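/- arXiv:1512.01671 — 2 statements merged into one kernel-verified Lean document; each statement's English description precedes it below -/
import Mathlib

section
/- Let d > 2s with s ∈ (0,1) and p ∈ [2, 2d/(d−2s)]. Suppose ρ satisfies the two-power bounds with γ_0 ∈ [0,d) and γ ∈ (d − (p/2)(d−2s), d]. Then every v ∈ X_{p,s,ρ} equals the Riesz potential of its fractional Laplacian: v = I_{d,s} ∗ (−Δ)^s v almost everywhere, where I_{d,s}(x) = κ_{d,s}|x|^{−(d−2s)}. -/
open MeasureTheory Filter Metric Set
open scoped Topology ENNReal

noncomputable section

abbrev Ed (d : ℕ) := EuclideanSpace ℝ (Fin d)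

/-- Truncated (away from the singularity) fractional-Laplacian integral. -/
noncomputable def fracLapTrunc (d : ℕ) (s : ℝ) (f : Ed d → ℝ) (x : Ed d) (ε : ℝ) : ℝ :=
  ∫ y in {y : Ed d | ε ≤ dist x y}, (f x - f y) / dist x y ^ ((d : ℝ) + 2 * s)

/-- Fractional Laplacian, as a principal value (limit of truncated integrals),
with normalization constant `Cds`. -/
noncomputable def fracLap (d : ℕ) (s Cds : ℝ) (f : Ed d → ℝ) (x : Ed d) : ℝ :=
  Cds * limUnder (𝓝[>] (0:ℝ)) (fracLapTrunc d s f x)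

/-- `V` is the distributional fractional Laplacian of `v`. -/
def IsDistFracLap (d : ℕ) (s Cds : ℝ) (v V : Ed d → ℝ) : Prop :=
  ∀ φ : Ed d → ℝ, ContDiff ℝ (⊤ : ℕ∞) φ → HasCompactSupport φ →
    ∫ x, v x * fracLap d s Cds φ x = ∫ x, V x * φ x

/-- The nonlocal quantity `l_{p,s}(f)(x) = ∫ |f x - f y|^p / |x-y|^{d+ps} dy`. -/
noncomputable def lps (d : ℕ) (p s : ℝ) (f : Ed d → ℝ) (x : Ed d) : ℝ :=
  ∫ y, |f x - f y| ^ p / dist x y ^ ((d : ℝ) + p * s)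

/-- A weight comparable to `|x|^{-γ₀}` on the unit ball and to `|x|^{-γ}` outside. -/
def TwoPowerWeight (d : ℕ) (ρ : Ed d → ℝ) (c C γ₀ γ : ℝ) : Prop :=
  0 < c ∧ c < C ∧
  (∀ᵐ x : Ed d, ‖x‖ ≤ 1 → c * ‖x‖ ^ (-γ₀) ≤ ρ x ∧ ρ x ≤ C * ‖x‖ ^ (-γ₀)) ∧
  (∀ᵐ x : Ed d, 1 < ‖x‖ → c * ‖x‖ ^ (-γ) ≤ ρ x ∧ ρ x ≤ C * ‖x‖ ^ (-γ))

/-- Standard mollification `f_ε = η_ε ∗ f` with `η_ε(x) = ε^{-d} η(x/ε)`. -/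
noncomputable def mollify (d : ℕ) (η : Ed d → ℝ) (ε : ℝ) (f : Ed d → ℝ) (x : Ed d) : ℝ :=
  ∫ y, (ε ^ (-(d:ℝ)) * η (ε⁻¹ • (x - y))) * f y

/-- A smooth nonnegative probability mollifier supported in the unit ball. -/
def IsMollifier (d : ℕ) (η : Ed d → ℝ) : Prop :=
  ContDiff ℝ (⊤ : ℕ∞) η ∧ (∀ x, 0 ≤ η x) ∧ tsupport η ⊆ closedBall (0 : Ed d) 1 ∧ ∫ x, η x = 1

/-- Membership in the weighted Lebesgue space `L^p(ρ dx)`. -/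
def MemWLp (d : ℕ) (p : ℝ) (ρ f : Ed d → ℝ) : Prop :=
  AEStronglyMeasurable f (volume : Measure (Ed d)) ∧
    Integrable (fun x => |f x| ^ p * ρ x)

/-- `v ∈ X_{p,s,ρ}` with distributional fractional Laplacian `V`. -/
def MemX (d : ℕ) (s Cds p : ℝ) (ρ : Ed d → ℝ) (v V : Ed d → ℝ) : Prop :=
  MemWLp d p ρ v ∧ IsDistFracLap d s Cds v V ∧
    MemWLp d (p / (p - 1)) (fun x => ρ x ^ (-(p / (p - 1) - 1))) V

/-- Weighted `L^p` norm. -/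
noncomputable def wNorm (d : ℕ) (p : ℝ) (ρ f : Ed d → ℝ) : ℝ :=
  (∫ x, |f x| ^ p * ρ x) ^ (1 / p)

/-- Norm of the space `X_{p,s,ρ}` (on the pair `(v, (−Δ)^s v)`). -/
noncomputable def xNorm (d : ℕ) (p : ℝ) (ρ : Ed d → ℝ) (v V : Ed d → ℝ) : ℝ :=
  Real.sqrt ((wNorm d p ρ v) ^ 2 +
    (wNorm d (p / (p - 1)) (fun x => ρ x ^ (-(p / (p - 1) - 1))) V) ^ 2)

/-- Riesz potential `I_{d,s} ∗ f` with kernel constant `κ`. -/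
noncomputable def riesz (d : ℕ) (s κ : ℝ) (f : Ed d → ℝ) (x : Ed d) : ℝ :=
  ∫ y, κ * ‖x - y‖ ^ (-((d:ℝ) - 2 * s)) * f y

end

noncomputable section RieszAux

/-- truncated kernel -/
def kern (d : ℕ) (s ε : ℝ) (h : Ed d) : ℝ :=
  if ε ≤ ‖h‖ then ‖h‖ ^ (-((d:ℝ) + 2 * s)) else 0

def mfun (d : ℕ) (s : ℝ) (h : Ed d) : ℝ :=
  min 1 (‖h‖ ^ 2) * ‖h‖ ^ (-((d:ℝ) + 2 * s))

lemma kern_nonneg (d : ℕ) (s ε : ℝ) (h : Ed d) : 0 ≤ kern d s ε h := by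
  unfold kern; split_ifs <;> positivity

lemma kern_le (d : ℕ) (s ε : ℝ) (h : Ed d) : kern d s ε h ≤ ‖h‖ ^ (-((d:ℝ) + 2 * s)) := by
  unfold kern; split_ifs
  · exact le_rfl
  · positivity

lemma kern_neg (d : ℕ) (s ε : ℝ) (h : Ed d) : kern d s ε (-h) = kern d s ε h := by
  simp [kern]

lemma kern_meas (d : ℕ) (s ε : ℝ) : Measurable (kern d s ε) := by
  unfold kern
  refine Measurable.ite ?_ (by fun_prop) (by fun_prop)
  exact measurableSet_le measurable_const measurable_norm

lemma mfun_meas (d : ℕ) (s : ℝ) : Measurable (mfun d s) := by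
  unfold mfun; fun_prop

lemma mfun_nonneg (d : ℕ) (s : ℝ) (h : Ed d) : 0 ≤ mfun d s h := by
  unfold mfun; positivity

lemma rpow_neg_le_one_add {r t q : ℝ} (hr : 0 < r) (hr1 : r ≤ 1) (ht : r ≤ t) (hq : 0 ≤ q) :
    t ^ (-q) ≤ (2 / r) ^ q * (1 + t) ^ (-q) := by
  have ht0 : 0 < t := lt_of_lt_of_le hr ht
  rw [Real.rpow_neg ht0.le, Real.rpow_neg (by positivity), ← div_eq_mul_inv,
    ← Real.div_rpow (by positivity) (by positivity), ← Real.inv_rpow ht0.le]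
  refine Real.rpow_le_rpow (by positivity) ?_ hq
  rw [inv_eq_one_div, div_div, div_le_div_iff₀ ht0 (by positivity)]
  nlinarith

lemma kern_int (d : ℕ) {s ε : ℝ} (hs : 0 < s) (hε : 0 < ε) : Integrable (kern d s ε) := by
  have h1 : Integrable (fun x : Ed d => (2 / min ε 1) ^ ((d:ℝ) + 2 * s) *
      (1 + ‖x‖) ^ (-((d:ℝ) + 2 * s))) := by
    refine (integrable_one_add_norm ?_).const_mul _
    simp; linarith
  refine h1.mono' (kern_meas d s ε).aestronglyMeasurable (ae_of_all _ fun x => ?_)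
  rw [Real.norm_of_nonneg (kern_nonneg d s ε x)]
  unfold kern
  split_ifs with h
  · exact rpow_neg_le_one_add (lt_min hε one_pos) (min_le_right _ _)
      ((min_le_left _ _).trans h) (by positivity)
  · have : 0 < min ε 1 := lt_min hε one_pos
    positivity

lemma integrable_of_inner_outer {d : ℕ} (hd : 1 ≤ d) {f : Ed d → ℝ} {A B α β : ℝ}
    (hα : α < d) (hβ : (d:ℝ) < β) (hf : AEStronglyMeasurable f volume)
    (h1 : ∀ᵐ x, ‖x‖ ≤ 1 → |f x| ≤ A * ‖x‖ ^ (-α))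
    (h2 : ∀ᵐ x, 1 < ‖x‖ → |f x| ≤ B * ‖x‖ ^ (-β)) : Integrable f := by
  have hB1 : IntegrableOn f (ball 0 1) := by
    refine integrableOn_ball_of_norm_le_rpow (C := A) (α := α) (by simpa using hd)
      (by simpa using hα) ?_ hf
    refine (ae_restrict_iff' measurableSet_ball).2 ?_
    filter_upwards [h1] with x hx hxb
    exact hx (by simpa using (mem_ball_zero_iff.1 hxb).le)
  have hB2 : IntegrableOn f (ball 0 1)ᶜ := by
    have h3 : Integrable (fun x : Ed d => max A B * ((2 / 1) ^ β * (1 + ‖x‖) ^ (-β))) := by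
      refine ((integrable_one_add_norm ?_).const_mul _).const_mul _
      simpa using hβ
    refine h3.integrableOn.mono' hf.restrict ?_
    refine (ae_restrict_iff' measurableSet_ball.compl).2 ?_
    filter_upwards [h1, h2] with x hx1 hx2 hxb
    have hx : 1 ≤ ‖x‖ := by simpa using hxb
    have hk := rpow_neg_le_one_add (r := 1) one_pos le_rfl hx
      (le_trans (Nat.cast_nonneg d) hβ.le)
    have hk0 : 0 ≤ ‖x‖ ^ (-β) := by positivity
    rcases hx.eq_or_lt with h | h
    · have := hx1 h.symm.le
      rw [← h] at this hk
      simp only [Real.one_rpow, mul_one] at this hk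
      rw [← h]
      have hA : 0 ≤ A := (abs_nonneg _).trans this
      calc ‖f x‖ ≤ A := this
        _ ≤ max A B * 1 := by simp
        _ ≤ _ := by gcongr
    · have := hx2 h
      have hB : 0 ≤ B := by
        by_contra hB
        have : 0 < ‖x‖ ^ (-β) := by positivity
        nlinarith [abs_nonneg (f x)]
      calc ‖f x‖ ≤ B * ‖x‖ ^ (-β) := this
        _ ≤ max A B * ‖x‖ ^ (-β) := by gcongr; exact le_max_right _ _
        _ ≤ _ := by gcongr
  rw [← integrableOn_univ, ← union_compl_self (ball (0:Ed d) 1)]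
  exact hB1.union hB2

lemma mfun_int {d : ℕ} (hd : 1 ≤ d) {s : ℝ} (hs : 0 < s) (hs1 : s < 1) :
    Integrable (mfun d s) := by
  refine integrable_of_inner_outer hd (A := 1) (B := 1) (α := (d:ℝ) + 2 * s - 2)
    (β := (d:ℝ) + 2 * s)
    (by linarith) (by linarith) (mfun_meas d s).aestronglyMeasurable ?_ ?_
  · refine ae_of_all _ fun x hx => ?_
    rw [abs_of_nonneg (mfun_nonneg d s x), one_mul]
    unfold mfun
    rcases eq_or_ne x 0 with rfl | hx0
    · simp; positivity
    · have hx' : 0 < ‖x‖ := norm_pos_iff.2 hx0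
      calc _ ≤ ‖x‖ ^ 2 * ‖x‖ ^ (-((d:ℝ) + 2 * s)) := by gcongr; exact min_le_right _ _
        _ = ‖x‖ ^ (2:ℝ) * ‖x‖ ^ (-((d:ℝ) + 2 * s)) := by norm_cast
        _ = _ := by rw [← Real.rpow_add hx']; congr 1; ring
        _ ≤ _ := le_rfl
  · refine ae_of_all _ fun x hx => ?_
    rw [abs_of_nonneg (mfun_nonneg d s x)]
    unfold mfun
    gcongr; exact min_le_left _ _

lemma mfun_scale {d : ℕ} {s R : ℝ} (hR : 0 < R) (h : Ed d) :
    min 1 (‖R⁻¹ • h‖ ^ 2) * ‖h‖ ^ (-((d:ℝ) + 2 * s)) =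
      R ^ (-((d:ℝ) + 2 * s)) * mfun d s (R⁻¹ • h) := by
  unfold mfun
  have : ‖h‖ ^ (-((d:ℝ) + 2 * s)) = R ^ (-((d:ℝ) + 2 * s)) * ‖R⁻¹ • h‖ ^ (-((d:ℝ) + 2 * s)) := by
    rw [← Real.mul_rpow hR.le (norm_nonneg _), norm_smul, norm_inv, Real.norm_of_nonneg hR.le,
      mul_inv_cancel_left₀ hR.ne']
  rw [this]; ring

lemma mfun_scale_int {d : ℕ} (hd : 1 ≤ d) {s R : ℝ} (hs : 0 < s) (hs1 : s < 1) (hR : 0 < R) :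
    Integrable (fun h : Ed d => min 1 (‖R⁻¹ • h‖ ^ 2) * ‖h‖ ^ (-((d:ℝ) + 2 * s))) := by
  simp_rw [mfun_scale hR]
  exact ((mfun_int hd hs hs1).comp_smul (inv_ne_zero hR.ne')).const_mul _

lemma mfun_scale_integral {d : ℕ} {s R : ℝ} (hR : 0 < R) :
    ∫ h : Ed d, min 1 (‖R⁻¹ • h‖ ^ 2) * ‖h‖ ^ (-((d:ℝ) + 2 * s)) =
      R ^ (-(2 * s)) * ∫ h, mfun d s h := by
  simp_rw [mfun_scale hR]
  rw [integral_const_mul, Measure.integral_comp_inv_smul_of_nonneg _ _ hR.le]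
  simp only [finrank_euclideanSpace, Fintype.card_fin, smul_eq_mul]
  rw [← mul_assoc, ← Real.rpow_natCast R d, ← Real.rpow_add hR]
  congr 2; ring

/-- Convolution form of the truncated fractional Laplacian. -/
lemma trunc_eq (d : ℕ) (s : ℝ) (f : Ed d → ℝ) (x : Ed d) (ε : ℝ) :
    fracLapTrunc d s f x ε = ∫ h, kern d s ε h * (f x - f (x - h)) := by
  unfold fracLapTrunc
  rw [← integral_indicator (measurableSet_le measurable_const (by fun_prop)),
    ← integral_sub_left_eq_self _ volume x]
  congr 1; ext h
  simp only [indicator, mem_ofPred_eq, dist_self_sub_right, kern]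
  split_ifs with hh
  · rw [Real.rpow_neg (norm_nonneg _)]; ring
  · simp

lemma kern_mul_int {d : ℕ} {s ε : ℝ} (hs : 0 < s) (hε : 0 < ε) {g : Ed d → ℝ} (hg : Measurable g)
    {A : ℝ} (hA : ∀ x, |g x| ≤ A) : Integrable (fun h => kern d s ε h * g h) :=
  (kern_int d hs hε).mul_bdd hg.aestronglyMeasurable (ae_of_all _ hA)

lemma trunc_symm {d : ℕ} {s ε : ℝ} (hs : 0 < s) (hε : 0 < ε) {f : Ed d → ℝ} (hf : Measurable f)
    {A : ℝ} (hA : ∀ x, |f x| ≤ A) (x : Ed d) :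
    fracLapTrunc d s f x ε = ∫ h, kern d s ε h * ((2 * f x - f (x - h) - f (x + h)) / 2) := by
  have e1 := trunc_eq d s f x ε
  have e2 := e1
  rw [← integral_neg_eq_self] at e2
  simp only [kern_neg, sub_neg_eq_add] at e2
  have i1 : Integrable (fun h => kern d s ε h * (f x - f (x - h))) :=
    kern_mul_int hs hε (by fun_prop) (A := A + A) fun h =>
      (abs_sub _ _).trans (add_le_add (hA _) (hA _))
  have i2 : Integrable (fun h => kern d s ε h * (f x - f (x + h))) :=
    kern_mul_int hs hε (by fun_prop) (A := A + A) fun h =>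
      (abs_sub _ _).trans (add_le_add (hA _) (hA _))
  have : fracLapTrunc d s f x ε = (fracLapTrunc d s f x ε + fracLapTrunc d s f x ε) / 2 := by ring
  rw [this]
  nth_rw 1 [e1]
  rw [e2, ← integral_add i1 i2, ← integral_div]
  congr 1; ext h; ring

/-- second-difference control at scale `R` -/
def SD (d : ℕ) (f : Ed d → ℝ) (D R : ℝ) : Prop :=
  ∀ x h, |2 * f x - f (x - h) - f (x + h)| ≤ D * min 1 (‖R⁻¹ • h‖ ^ 2)

lemma trunc_integrand_le {d : ℕ} {s ε : ℝ} {f : Ed d → ℝ}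
    {D R : ℝ} (hD : SD d f D R) (x h : Ed d) :
    ‖kern d s ε h * ((2 * f x - f (x - h) - f (x + h)) / 2)‖ ≤
      D * (min 1 (‖R⁻¹ • h‖ ^ 2) * ‖h‖ ^ (-((d:ℝ) + 2 * s))) := by
  rw [norm_mul, Real.norm_of_nonneg (kern_nonneg _ _ _ _), Real.norm_eq_abs, abs_div, abs_two]
  have h1 := hD x h
  have h0 := abs_nonneg (2 * f x - f (x - h) - f (x + h))
  have h2 := kern_le d s ε h
  have h3 := kern_nonneg d s ε h
  calc _ ≤ ‖h‖ ^ (-((d:ℝ) + 2 * s)) * (D * min 1 (‖R⁻¹ • h‖ ^ 2)) := by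
        gcongr
        linarith
    _ = _ := by ring

lemma trunc_bound {d : ℕ} (hd : 1 ≤ d) {s ε : ℝ} (hs : 0 < s) (hs1 : s < 1) (hε : 0 < ε)
    {f : Ed d → ℝ} (hf : Measurable f) {A : ℝ} (hA : ∀ x, |f x| ≤ A)
    {D R : ℝ} (hR : 0 < R) (hD : SD d f D R) (x : Ed d) :
    |fracLapTrunc d s f x ε| ≤ D * R ^ (-(2 * s)) * ∫ h, mfun d s h := by
  rw [trunc_symm hs hε hf hA, mul_assoc, ← mfun_scale_integral hR, ← integral_const_mul]
  exact norm_integral_le_of_norm_le ((mfun_scale_int hd hs hs1 hR).const_mul D)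
    (ae_of_all _ fun h => trunc_integrand_le hD x h)

def Lfun (d : ℕ) (s : ℝ) (f : Ed d → ℝ) (x : Ed d) : ℝ :=
  ∫ h, ‖h‖ ^ (-((d:ℝ) + 2 * s)) * ((2 * f x - f (x - h) - f (x + h)) / 2)

lemma trunc_tendsto {d : ℕ} (hd : 1 ≤ d) {s : ℝ} (hs : 0 < s) (hs1 : s < 1)
    {f : Ed d → ℝ} (hf : Measurable f) {A : ℝ} (hA : ∀ x, |f x| ≤ A)
    {D R : ℝ} (hR : 0 < R) (hD : SD d f D R) (x : Ed d) :
    Tendsto (fracLapTrunc d s f x) (𝓝[>] (0:ℝ)) (𝓝 (Lfun d s f x)) := by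
  have h1 : Tendsto (fun ε => ∫ h, kern d s ε h * ((2 * f x - f (x - h) - f (x + h)) / 2))
      (𝓝[>] (0:ℝ)) (𝓝 (Lfun d s f x)) := by
    refine tendsto_integral_filter_of_dominated_convergence
      (fun h => D * (min 1 (‖R⁻¹ • h‖ ^ 2) * ‖h‖ ^ (-((d:ℝ) + 2 * s)))) ?_ ?_ ?_ ?_
    · refine Eventually.of_forall fun ε => ?_
      exact ((kern_meas d s ε).mul (by fun_prop)).aestronglyMeasurable
    · exact Eventually.of_forall fun ε => ae_of_all _ fun h => trunc_integrand_le hD x h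
    · exact (mfun_scale_int hd hs hs1 hR).const_mul D
    · refine ae_of_all _ fun h => ?_
      rcases eq_or_ne h 0 with rfl | hh
      · have : (2 * f x - f (x - 0) - f (x + 0)) / 2 = 0 := by simp; ring
        rw [this]; simp
      · refine tendsto_const_nhds.congr' ?_
        have : ∀ᶠ ε in 𝓝[>] (0:ℝ), ε < ‖h‖ :=
          nhdsWithin_le_nhds (Iio_mem_nhds (norm_pos_iff.2 hh))
        filter_upwards [this] with ε hε
        simp [kern, hε.le]
  refine h1.congr' ?_
  filter_upwards [self_mem_nhdsWithin] with ε hε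
  exact (trunc_symm hs hε hf hA x).symm

lemma fracLap_eq {d : ℕ} {s Cds : ℝ} {f : Ed d → ℝ} {x : Ed d} {l : ℝ}
    (h : Tendsto (fracLapTrunc d s f x) (𝓝[>] (0:ℝ)) (𝓝 l)) :
    fracLap d s Cds f x = Cds * l := by
  unfold fracLap; rw [h.limUnder_eq]

end RieszAux

noncomputable section RieszAux

lemma second_diff_of_lip {d : ℕ} {f : Ed d → ℝ} {f' : Ed d → (Ed d →L[ℝ] ℝ)}
    (hf : ∀ x, HasFDerivAt f (f' x) x) {B : ℝ} (hB0 : 0 ≤ B)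
    (hB : ∀ x y, ‖f' x - f' y‖ ≤ B * ‖x - y‖)
    (x h : Ed d) : |2 * f x - f (x - h) - f (x + h)| ≤ 2 * B * ‖h‖ ^ 2 := by
  have hd : ∀ t : ℝ, HasDerivAt (fun t : ℝ => f (x - t • h) + f (x + t • h))
      ((f' (x - t • h)) (-h) + (f' (x + t • h)) h) t := by
    intro t
    have h1 : HasDerivAt (fun t : ℝ => x - t • h) (-h) t := by
      simpa using ((hasDerivAt_id t).smul_const h).const_sub x
    have h2 : HasDerivAt (fun t : ℝ => x + t • h) h t := by
      simpa using ((hasDerivAt_id t).smul_const h).const_add x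
    exact ((hf _).comp_hasDerivAt t h1).add ((hf _).comp_hasDerivAt t h2)
  have := norm_image_sub_le_of_norm_deriv_le_segment_01' (C := 2 * B * ‖h‖ ^ 2)
    (fun t _ => (hd t).hasDerivWithinAt) ?_
  · simp only [one_smul, zero_smul, sub_zero, add_zero, Real.norm_eq_abs] at this
    rw [← abs_neg]
    convert this using 2; ring
  · intro t ht
    have e : (f' (x - t • h)) (-h) + (f' (x + t • h)) h =
        (f' (x + t • h) - f' (x - t • h)) h := by simp; ring
    rw [e]
    have e2 : (x + t • h) - (x - t • h) = (2 * t) • h := by module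
    calc _ ≤ ‖f' (x + t • h) - f' (x - t • h)‖ * ‖h‖ := ContinuousLinearMap.le_opNorm _ _
      _ ≤ B * ‖(x + t • h) - (x - t • h)‖ * ‖h‖ := by gcongr; exact hB _ _
      _ = 2 * B * t * ‖h‖ ^ 2 := by
        rw [e2, norm_smul, Real.norm_of_nonneg (by linarith [ht.1])]; ring
      _ ≤ 2 * B * 1 * ‖h‖ ^ 2 := by gcongr; exact ht.2.le
      _ = _ := by ring

lemma SD_of {d : ℕ} {f : Ed d → ℝ} {A B : ℝ} (hA : ∀ x, |f x| ≤ A)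
    (hB : ∀ x h, |2 * f x - f (x - h) - f (x + h)| ≤ B * ‖h‖ ^ 2) :
    SD d f (max (4 * A) B) 1 := by
  intro x h
  rw [inv_one, one_smul]
  have h1 : |2 * f x - f (x - h) - f (x + h)| ≤ 4 * A := by
    have a1 := abs_le.1 (hA x)
    have a2 := abs_le.1 (hA (x - h))
    have a3 := abs_le.1 (hA (x + h))
    rw [abs_le]; constructor <;> linarith [a1.1, a1.2, a2.1, a2.2, a3.1, a3.2]
  rcases le_total 1 (‖h‖ ^ 2) with hh | hh
  · rw [min_eq_left hh, mul_one]; exact h1.trans (le_max_left _ _)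
  · rw [min_eq_right hh]
    exact (hB x h).trans (by gcongr; exact le_max_right _ _)

lemma SD_scale {d : ℕ} {f : Ed d → ℝ} {D R K : ℝ} (h : SD d f D 1) :
    SD d (fun x => K * f (R⁻¹ • x)) (|K| * D) R := by
  intro x y
  have := h (R⁻¹ • x) (R⁻¹ • y)
  simp only [inv_one, one_smul] at this
  beta_reduce
  rw [smul_sub, smul_add, show 2 * (K * f (R⁻¹ • x)) - K * f (R⁻¹ • x - R⁻¹ • y)
    - K * f (R⁻¹ • x + R⁻¹ • y) = K * (2 * f (R⁻¹ • x) - f (R⁻¹ • x - R⁻¹ • y)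
    - f (R⁻¹ • x + R⁻¹ • y)) by ring, abs_mul, mul_assoc]
  gcongr

lemma SD_refl {d : ℕ} {f : Ed d → ℝ} {D R : ℝ} (h : SD d f D R) (z : Ed d) :
    SD d (fun x => f (z - x)) D R := by
  intro x y
  have := h (z - x) y
  simp only
  rw [show z - (x - y) = z - x + y by abel, show z - (x + y) = z - x - y by abel]
  convert this using 2; ring

lemma SD_smooth {d : ℕ} {ψ : Ed d → ℝ} (h1 : ContDiff ℝ (⊤ : ℕ∞) ψ) (h2 : HasCompactSupport ψ) :
    ∃ A D : ℝ, 0 ≤ A ∧ 0 ≤ D ∧ (∀ x, |ψ x| ≤ A) ∧ SD d ψ D 1 := by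
  obtain ⟨A, hA⟩ := h2.exists_bound_of_continuous h1.continuous
  have hA0 : 0 ≤ A := (norm_nonneg _).trans (hA 0)
  have h3 : ContDiff ℝ 1 (fderiv ℝ ψ) := h1.fderiv_right (by norm_cast)
  obtain ⟨B, hB⟩ := h3.lipschitzWith_of_hasCompactSupport (h2.fderiv ℝ) one_ne_zero
  refine ⟨A, max (4 * A) (2 * B), hA0, by positivity, hA, SD_of hA ?_⟩
  refine second_diff_of_lip (f' := fderiv ℝ ψ) (fun x => ?_) B.2 (fun x y => hB.norm_sub_le x y)
  exact (h1.differentiable (by simp) x).hasFDerivAt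

/-- `C^{1,1}` regularisation of `u^{-b}` -/
def Freg (b u : ℝ) : ℝ := 1 - b * ∫ w in (1:ℝ)..u, (max 1 w) ^ (-(b + 1))

lemma Freg_cont (b : ℝ) : Continuous (fun w : ℝ => (max 1 w) ^ (-(b + 1))) := by
  refine Continuous.rpow_const (by fun_prop) fun x => Or.inl ?_
  have : (1:ℝ) ≤ max 1 x := le_max_left _ _
  linarith

lemma Freg_deriv (b u : ℝ) : HasDerivAt (Freg b) (-(b * (max 1 u) ^ (-(b + 1)))) u := by
  have := ((Freg_cont b).integral_hasStrictDerivAt 1 u).hasDerivAt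
  exact (this.const_mul b).const_sub 1

lemma Freg_ge {b u : ℝ} (hb : 0 < b) (hu : 1 ≤ u) : Freg b u = u ^ (-b) := by
  unfold Freg
  have : ∫ w in (1:ℝ)..u, (max 1 w) ^ (-(b + 1)) = ∫ w in (1:ℝ)..u, w ^ (-(b + 1)) := by
    refine intervalIntegral.integral_congr fun w hw => ?_
    rw [uIcc_of_le hu] at hw
    simp only [max_eq_right hw.1]
  rw [this, integral_rpow]
  · rw [show -(b + 1) + 1 = -b by ring]
    simp only [Real.one_rpow]
    field_simp; ring
  · right
    refine ⟨by linarith, ?_⟩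
    rw [uIcc_of_le hu]
    intro h; linarith [h.1]

lemma Freg_le {b u : ℝ} (hu : u ≤ 1) : Freg b u = 1 + b * (1 - u) := by
  unfold Freg
  have : ∫ w in (1:ℝ)..u, (max 1 w) ^ (-(b + 1)) = ∫ w in (1:ℝ)..u, (1:ℝ) := by
    refine intervalIntegral.integral_congr fun w hw => ?_
    rw [uIcc_of_ge hu] at hw
    simp only [max_eq_left hw.2, Real.one_rpow]
  rw [this]
  simp only [intervalIntegral.integral_const, smul_eq_mul]; ring

lemma Freg_nonneg {b u : ℝ} (hb : 0 < b) : 0 ≤ Freg b u := by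
  rcases le_total u 1 with h | h
  · rw [Freg_le h]; have : 0 ≤ b * (1 - u) := mul_nonneg hb.le (by linarith)
    linarith
  · rw [Freg_ge hb h]; positivity

lemma Freg_bdd {b u : ℝ} (hb : 0 < b) (hu : 0 ≤ u) : Freg b u ≤ 1 + b := by
  rcases le_total u 1 with h | h
  · rw [Freg_le h]; nlinarith
  · rw [Freg_ge hb h]
    have : u ^ (-b) ≤ 1 := Real.rpow_le_one_of_one_le_of_nonpos h (by linarith)
    linarith

lemma rpow_diff_aux {X Y q : ℝ} (hX : 1 ≤ X) (hXY : X ≤ Y) (hq : 0 ≤ q) :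
    X * (X ^ (-q) - Y ^ (-q)) ≤ q * (Y - X) := by
  have hX0 : 0 < X := by linarith
  have hY0 : 0 < Y := by linarith
  have h1 : X ^ (-q) ≤ 1 := Real.rpow_le_one_of_one_le_of_nonpos hX (by linarith)
  have h0 : 0 < X ^ (-q) := by positivity
  have ht : 0 < Y / X := by positivity
  have h2 : 1 - q * (Y / X - 1) ≤ (Y / X) ^ (-q) := by
    rw [Real.rpow_def_of_pos ht]
    have := Real.add_one_le_exp (Real.log (Y / X) * -q)
    have h3 := Real.log_le_sub_one_of_pos ht
    nlinarith
  have h4 : Y ^ (-q) = X ^ (-q) * (Y / X) ^ (-q) := by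
    rw [← Real.mul_rpow hX0.le ht.le]; congr 1; field_simp
  have h5 : 0 ≤ q * (Y / X - 1) := by
    refine mul_nonneg hq ?_
    rw [sub_nonneg, le_div_iff₀ hX0]; linarith
  calc X * (X ^ (-q) - Y ^ (-q)) = X * (X ^ (-q) * (1 - (Y / X) ^ (-q))) := by rw [h4]; ring
    _ ≤ X * (X ^ (-q) * (q * (Y / X - 1))) := by gcongr; linarith
    _ ≤ X * (1 * (q * (Y / X - 1))) := by gcongr
    _ = q * (Y - X) := by field_simp

lemma grad_lip {d : ℕ} {q : ℝ} (hq : 0 ≤ q) (x y : Ed d) :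
    ‖(max 1 ‖x‖) ^ (-q) • x - (max 1 ‖y‖) ^ (-q) • y‖ ≤ (1 + q) * ‖x - y‖ := by
  wlog hxy : ‖x‖ ≤ ‖y‖ generalizing x y with H
  · rw [norm_sub_rev, norm_sub_rev x]; exact H y x (le_of_not_ge hxy)
  set X := max 1 ‖x‖ with hX
  set Y := max 1 ‖y‖ with hY
  have hX1 : 1 ≤ X := le_max_left _ _
  have hY1 : 1 ≤ Y := le_max_left _ _
  have hXY : X ≤ Y := max_le_max le_rfl hxy
  have hYX : Y - X ≤ ‖x - y‖ := by
    have h1 : Y ≤ X + ‖x - y‖ := by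
      refine max_le ?_ ?_
      · linarith [norm_nonneg (x - y)]
      · have := norm_sub_norm_le y x
        rw [norm_sub_rev] at this
        linarith [le_max_right 1 ‖x‖]
    linarith
  have hm : Y ^ (-q) ≤ X ^ (-q) :=
    Real.rpow_le_rpow_of_nonpos (by linarith) hXY (by linarith)
  have hY2 : Y ^ (-q) ≤ 1 := Real.rpow_le_one_of_one_le_of_nonpos hY1 (by linarith)
  have hY3 : 0 ≤ Y ^ (-q) := by positivity
  have e : X ^ (-q) • x - Y ^ (-q) • y = Y ^ (-q) • (x - y) + (X ^ (-q) - Y ^ (-q)) • x := by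
    module
  calc _ ≤ ‖Y ^ (-q) • (x - y)‖ + ‖(X ^ (-q) - Y ^ (-q)) • x‖ := by rw [e]; exact norm_add_le _ _
    _ = Y ^ (-q) * ‖x - y‖ + (X ^ (-q) - Y ^ (-q)) * ‖x‖ := by
      rw [norm_smul, norm_smul, Real.norm_of_nonneg hY3, Real.norm_of_nonneg (by linarith)]
    _ ≤ 1 * ‖x - y‖ + (X ^ (-q) - Y ^ (-q)) * X := by
      gcongr
      exact le_max_right _ _
    _ ≤ 1 * ‖x - y‖ + q * (Y - X) := by rw [mul_comm _ X]; linarith [rpow_diff_aux hX1 hXY hq]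
    _ ≤ 1 * ‖x - y‖ + q * ‖x - y‖ := by gcongr
    _ = _ := by ring

lemma max_sq_rpow {t q : ℝ} (ht : 0 ≤ t) : (max 1 (t ^ 2)) ^ (-q) = (max 1 t) ^ (-(2 * q)) := by
  have : max 1 (t ^ 2) = (max 1 t) ^ (2:ℝ) := by
    norm_cast
    rcases le_total 1 t with h | h
    · rw [max_eq_right h, max_eq_right (by nlinarith)]
    · rw [max_eq_left h, max_eq_left (by nlinarith)]; norm_num
  rw [this, ← Real.rpow_mul (by positivity)]; congr 1; ring

def Jone (d : ℕ) (b : ℝ) (x : Ed d) : ℝ := Freg b (‖x‖ ^ 2)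

lemma Jone_fderiv {d : ℕ} (b : ℝ) (x : Ed d) :
    HasFDerivAt (Jone d b) ((-(2 * b)) • innerSL ℝ ((max 1 ‖x‖) ^ (-(2 * (b + 1))) • x)) x := by
  have h1 : HasFDerivAt (fun x : Ed d => ‖x‖ ^ 2) (2 • innerSL ℝ x) x :=
    (hasStrictFDerivAt_norm_sq x).hasFDerivAt
  have h2 := (Freg_deriv b (‖x‖ ^ 2)).comp_hasFDerivAt x h1
  rw [max_sq_rpow (norm_nonneg x)] at h2
  refine h2.congr_fderiv ?_
  ext y
  simp
  ring

lemma Jone_SD {d : ℕ} {b : ℝ} (hb : 0 < b) : ∃ D : ℝ, 0 ≤ D ∧ SD d (Jone d b) D 1 := by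
  refine ⟨_, ?_, SD_of (A := 1 + b) (B := 2 * (2 * b * (1 + 2 * (b + 1)))) ?_ ?_⟩
  · positivity
  · intro x
    unfold Jone
    rw [abs_of_nonneg (Freg_nonneg hb)]
    exact Freg_bdd hb (by positivity)
  · refine second_diff_of_lip (Jone_fderiv b) (by positivity) fun x y => ?_
    have e : (-(2 * b)) • innerSL ℝ ((max 1 ‖x‖) ^ (-(2 * (b + 1))) • x) -
        (-(2 * b)) • innerSL ℝ ((max 1 ‖y‖) ^ (-(2 * (b + 1))) • y) =
        (-(2 * b)) • innerSL ℝ ((max 1 ‖x‖) ^ (-(2 * (b + 1))) • x -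
          (max 1 ‖y‖) ^ (-(2 * (b + 1))) • y) := by
      ext z; simp; ring
    rw [e, norm_smul, innerSL_apply_norm, Real.norm_eq_abs, abs_neg,
      abs_of_nonneg (by positivity), mul_assoc (2 * b)]
    gcongr
    exact grad_lip (by positivity) x y

lemma Jone_meas {d : ℕ} (b : ℝ) : Measurable (Jone d b) :=
  (continuous_iff_continuousAt.2 fun x => (Jone_fderiv b x).continuousAt).measurable

end RieszAux

noncomputable section RieszAux

def Ik (d : ℕ) (s κ : ℝ) (z : Ed d) : ℝ := κ * ‖z‖ ^ (-((d:ℝ) - 2 * s))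

def JR (d : ℕ) (s κ R : ℝ) (z : Ed d) : ℝ :=
  (κ * R ^ (-((d:ℝ) - 2 * s))) * Jone d (((d:ℝ) - 2 * s) / 2) (R⁻¹ • z)

def IR (d : ℕ) (s κ R : ℝ) (z : Ed d) : ℝ := Ik d s κ z - JR d s κ R z

lemma Ik_meas (d : ℕ) (s κ : ℝ) : Measurable (Ik d s κ) := by
  unfold Ik; fun_prop

lemma Ik_nonneg {d : ℕ} {s κ : ℝ} (hκ : 0 < κ) (z : Ed d) : 0 ≤ Ik d s κ z := by
  unfold Ik; positivity

lemma JR_meas (d : ℕ) (s κ R : ℝ) : Measurable (JR d s κ R) := by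
  unfold JR
  exact ((Jone_meas _).comp (by fun_prop)).const_mul _

lemma IR_meas (d : ℕ) (s κ R : ℝ) : Measurable (IR d s κ R) :=
  (Ik_meas d s κ).sub (JR_meas d s κ R)

lemma JR_abs {d : ℕ} {s κ R : ℝ} (hds : 2 * s < d) (hκ : 0 < κ) (hR : 0 < R) (z : Ed d) :
    |JR d s κ R z| ≤ κ * R ^ (-((d:ℝ) - 2 * s)) * (1 + ((d:ℝ) - 2 * s) / 2) := by
  have hb : 0 < ((d:ℝ) - 2 * s) / 2 := by linarith
  unfold JR
  rw [abs_mul, abs_of_nonneg (by positivity : 0 ≤ κ * R ^ (-((d:ℝ) - 2 * s)))]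
  gcongr
  unfold Jone
  rw [abs_of_nonneg (Freg_nonneg hb)]
  exact Freg_bdd hb (by positivity)

lemma JR_SD {d : ℕ} {s κ : ℝ} (hds : 2 * s < d) (hκ : 0 < κ) : ∃ D : ℝ, 0 ≤ D ∧
    ∀ R, 0 < R → SD d (JR d s κ R) (κ * R ^ (-((d:ℝ) - 2 * s)) * D) R := by
  have hb : 0 < ((d:ℝ) - 2 * s) / 2 := by linarith
  obtain ⟨D, hD0, hD⟩ := Jone_SD (d := d) hb
  refine ⟨D, hD0, fun R hR => ?_⟩
  have := SD_scale (R := R) (K := κ * R ^ (-((d:ℝ) - 2 * s))) hD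
  rwa [abs_of_nonneg (by positivity)] at this

lemma Ik_scale {d : ℕ} {s κ R : ℝ} (hR : 0 < R) (z : Ed d) :
    Ik d s κ z = R ^ (-((d:ℝ) - 2 * s)) * Ik d s κ (R⁻¹ • z) := by
  unfold Ik
  have : ‖z‖ ^ (-((d:ℝ) - 2 * s)) = R ^ (-((d:ℝ) - 2 * s)) * ‖R⁻¹ • z‖ ^ (-((d:ℝ) - 2 * s)) := by
    rw [← Real.mul_rpow hR.le (norm_nonneg _), norm_smul, norm_inv, Real.norm_of_nonneg hR.le,
      mul_inv_cancel_left₀ hR.ne']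
  rw [this]; ring

lemma IR_scale {d : ℕ} {s κ R : ℝ} (hR : 0 < R) (z : Ed d) :
    IR d s κ R z = R ^ (-((d:ℝ) - 2 * s)) * IR d s κ 1 (R⁻¹ • z) := by
  unfold IR
  rw [Ik_scale hR, mul_sub]
  unfold JR
  simp; ring

lemma IR_one_zero {d : ℕ} {s κ : ℝ} (hds : 2 * s < d) {z : Ed d} (hz : 1 ≤ ‖z‖) :
    IR d s κ 1 z = 0 := by
  unfold IR JR Ik Jone
  rw [inv_one, one_smul, Freg_ge (by linarith) (by nlinarith [norm_nonneg z]),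
    ← Real.rpow_natCast, ← Real.rpow_mul (norm_nonneg _)]
  simp only [Real.one_rpow, mul_one]
  rw [show ((2:ℕ):ℝ) * -(((d:ℝ) - 2 * s) / 2) = -((d:ℝ) - 2 * s) by push_cast; ring]
  ring

lemma IR_zero {d : ℕ} {s κ R : ℝ} (hds : 2 * s < d) (hR : 0 < R) {z : Ed d} (hz : R ≤ ‖z‖) :
    IR d s κ R z = 0 := by
  rw [IR_scale hR, IR_one_zero hds, mul_zero]
  rw [norm_smul, norm_inv, Real.norm_of_nonneg hR.le, inv_mul_eq_div, le_div_iff₀ hR]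
  linarith

lemma IR_one_le {d : ℕ} {s κ : ℝ} (hds : 2 * s < d) (hκ : 0 < κ) {z : Ed d} (hz : z ≠ 0) :
    |IR d s κ 1 z| ≤ (2 + ((d:ℝ) - 2 * s) / 2) * κ * ‖z‖ ^ (-((d:ℝ) - 2 * s)) := by
  have hb : 0 < ((d:ℝ) - 2 * s) / 2 := by linarith
  have hz0 : 0 < ‖z‖ := norm_pos_iff.2 hz
  rcases le_total 1 ‖z‖ with h | h
  · rw [IR_one_zero hds h, abs_zero]; positivity
  · have h1 := JR_abs hds hκ one_pos z
    simp only [Real.one_rpow, mul_one] at h1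
    have h2 : 1 ≤ ‖z‖ ^ (-((d:ℝ) - 2 * s)) :=
      Real.one_le_rpow_of_pos_of_le_one_of_nonpos hz0 h (by linarith)
    have h3 : |Ik d s κ z| = κ * ‖z‖ ^ (-((d:ℝ) - 2 * s)) := abs_of_nonneg (Ik_nonneg hκ z)
    calc |IR d s κ 1 z| ≤ |Ik d s κ z| + |JR d s κ 1 z| := abs_sub _ _
      _ ≤ κ * ‖z‖ ^ (-((d:ℝ) - 2 * s)) + κ * (1 + ((d:ℝ) - 2 * s) / 2) := by linarith
      _ ≤ κ * ‖z‖ ^ (-((d:ℝ) - 2 * s)) + κ * (1 + ((d:ℝ) - 2 * s) / 2) *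
          ‖z‖ ^ (-((d:ℝ) - 2 * s)) := by
        have := le_mul_of_one_le_right
          (by positivity : 0 ≤ κ * (1 + ((d:ℝ) - 2 * s) / 2)) h2
        linarith
      _ = _ := by ring

lemma IR_le {d : ℕ} {s κ R : ℝ} (hds : 2 * s < d) (hκ : 0 < κ) (hR : 0 < R) {z : Ed d}
    (hz : z ≠ 0) : |IR d s κ R z| ≤ (2 + ((d:ℝ) - 2 * s) / 2) * Ik d s κ z := by
  rw [IR_scale hR, Ik_scale hR, abs_mul, abs_of_nonneg (by positivity)]
  have := IR_one_le hds hκ (z := R⁻¹ • z) (by simp [hz, hR.ne'])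
  unfold Ik
  calc _ ≤ R ^ (-((d:ℝ) - 2 * s)) * ((2 + ((d:ℝ) - 2 * s) / 2) * κ *
        ‖R⁻¹ • z‖ ^ (-((d:ℝ) - 2 * s))) := by gcongr
    _ = _ := by ring

lemma ae_ne_zero {d : ℕ} (hd : 1 ≤ d) : ∀ᵐ z : Ed d, z ≠ 0 := by
  have : Nonempty (Fin d) := ⟨⟨0, hd⟩⟩
  exact Measure.ae_ne volume 0

lemma IR_one_int {d : ℕ} (hd : 1 ≤ d) {s κ : ℝ} (hs : 0 < s) (hds : 2 * s < d) (hκ : 0 < κ) :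
    Integrable (IR d s κ 1) := by
  refine integrable_of_inner_outer hd (α := (d:ℝ) - 2 * s) (β := d + 1) (B := 0)
    (A := (2 + ((d:ℝ) - 2 * s) / 2) * κ) (by linarith)
    (by linarith) (IR_meas _ _ _ _).aestronglyMeasurable ?_ ?_
  · filter_upwards [ae_ne_zero hd] with z hz _
    exact IR_one_le hds hκ hz
  · refine ae_of_all _ fun z hz => ?_
    rw [IR_one_zero hds hz.le]; simp

lemma IR_int {d : ℕ} (hd : 1 ≤ d) {s κ R : ℝ} (hs : 0 < s) (hds : 2 * s < d) (hκ : 0 < κ)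
    (hR : 0 < R) : Integrable (IR d s κ R) := by
  rw [show IR d s κ R = fun z => R ^ (-((d:ℝ) - 2 * s)) * IR d s κ 1 (R⁻¹ • z) from
    funext fun z => IR_scale hR z]
  exact ((IR_one_int hd hs hds hκ).comp_smul (inv_ne_zero hR.ne')).const_mul _

lemma IR_L1 {d : ℕ} {s κ R : ℝ} (hR : 0 < R) :
    ∫ z, |IR d s κ R z| = R ^ (2 * s) * ∫ z, |IR d s κ 1 z| := by
  simp_rw [IR_scale hR, abs_mul]
  rw [integral_const_mul,
    Measure.integral_comp_inv_smul_of_nonneg volume (fun z => |IR d s κ 1 z|) hR.le,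
    abs_of_nonneg (by positivity)]
  simp only [finrank_euclideanSpace, Fintype.card_fin, smul_eq_mul]
  rw [← mul_assoc, ← Real.rpow_natCast R d, ← Real.rpow_add hR]
  congr 2; ring

/-- decay of the truncated fractional Laplacian of a test function -/
lemma trunc_decay {d : ℕ} (hd : 1 ≤ d) {s : ℝ} (hs : 0 < s) (hs1 : s < 1)
    {ψ : Ed d → ℝ} (h1 : ContDiff ℝ (⊤ : ℕ∞) ψ) (h2 : HasCompactSupport ψ) :
    ∃ K : ℝ, 0 ≤ K ∧ ∀ ε, 0 < ε → ∀ y,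
      |fracLapTrunc d s ψ y ε| ≤ K * (1 + ‖y‖) ^ (-((d:ℝ) + 2 * s)) := by
  obtain ⟨A, D, hA0, hD0, hA, hD⟩ := SD_smooth h1 h2
  have hψm : Measurable ψ := h1.continuous.measurable
  have hψi : Integrable ψ := h1.continuous.integrable_of_hasCompactSupport h2
  obtain ⟨M, hM0, hM⟩ := h2.isCompact.isBounded.exists_pos_norm_lt
  have hM' : ∀ x, M ≤ ‖x‖ → ψ x = 0 := fun x hx => by
    by_contra h
    exact absurd (hM x (subset_tsupport _ h)) (not_lt.2 hx)
  set N : ℝ := (d:ℝ) + 2 * s with hN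
  have hN0 : 0 ≤ N := by positivity
  set P : ℝ := D * 1 ^ (-(2 * s)) * ∫ h, mfun d s h with hP
  have hP0 : 0 ≤ P := by
    have : 0 ≤ ∫ h, mfun d s h := integral_nonneg (mfun_nonneg d s)
    positivity
  have hI0 : 0 ≤ ∫ x, |ψ x| := integral_nonneg fun _ => abs_nonneg _
  refine ⟨P * (2 + 2 * M) ^ N + 2 ^ N * 2 ^ N * ∫ x, |ψ x|, by positivity, fun ε hε y => ?_⟩
  have hy0 : 0 < 1 + ‖y‖ := by positivity
  rcases le_total ‖y‖ (2 * M + 1) with hy | hy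
  · have hb := trunc_bound hd hs hs1 hε hψm hA one_pos hD y
    have : 1 ≤ (2 + 2 * M) ^ N * (1 + ‖y‖) ^ (-N) := by
      rw [Real.rpow_neg hy0.le, ← div_eq_mul_inv, le_div_iff₀ (by positivity), one_mul]
      exact Real.rpow_le_rpow hy0.le (by linarith) hN0
    calc _ ≤ P * 1 := by rw [mul_one]; exact hb
      _ ≤ P * ((2 + 2 * M) ^ N * (1 + ‖y‖) ^ (-N)) := by gcongr
      _ = P * (2 + 2 * M) ^ N * (1 + ‖y‖) ^ (-N) := by ring
      _ ≤ _ := by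
        gcongr
        have : 0 ≤ 2 ^ N * 2 ^ N * ∫ x, |ψ x| := by positivity
        linarith
  · have hyp : 0 < ‖y‖ := by linarith
    have e1 : |fracLapTrunc d s ψ y ε| ≤ (‖y‖ / 2) ^ (-N) * ∫ x, |ψ x| := by
      rw [trunc_eq, ← integral_sub_left_eq_self (fun x => |ψ x|) volume y, ← integral_const_mul]
      have hii : Integrable (fun h => (‖y‖ / 2) ^ (-N) * |ψ (y - h)|) :=
        (hψi.abs.comp_sub_left y).const_mul _
      change ‖∫ h, kern d s ε h * (ψ y - ψ (y - h))‖ ≤ _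
      refine norm_integral_le_of_norm_le hii (ae_of_all _ fun h => ?_)
      · rw [hM' y (by linarith), zero_sub, norm_mul, norm_neg, Real.norm_eq_abs (ψ _),
          Real.norm_of_nonneg (kern_nonneg _ _ _ _)]
        rcases le_total M ‖y - h‖ with hh | hh
        · rw [hM' _ hh]; simp
        · gcongr
          refine (kern_le _ _ _ _).trans ?_
          refine Real.rpow_le_rpow_of_nonpos (by positivity) ?_ (by linarith)
          have := norm_sub_norm_le y h
          linarith
    have e2 : (‖y‖ / 2) ^ (-N) = 2 ^ N * ‖y‖ ^ (-N) := by
      rw [Real.div_rpow hyp.le (by norm_num), Real.rpow_neg (by norm_num : (0:ℝ) ≤ 2)]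
      field_simp
    have e3 := rpow_neg_le_one_add (r := 1) (t := ‖y‖) one_pos le_rfl (by linarith) hN0
    rw [div_one] at e3
    calc _ ≤ 2 ^ N * ‖y‖ ^ (-N) * ∫ x, |ψ x| := by rw [← e2]; exact e1
      _ ≤ 2 ^ N * (2 ^ N * (1 + ‖y‖) ^ (-N)) * ∫ x, |ψ x| := by gcongr
      _ = (2 ^ N * 2 ^ N * ∫ x, |ψ x|) * (1 + ‖y‖) ^ (-N) := by ring
      _ ≤ _ := by
        gcongr
        have : 0 ≤ P * (2 + 2 * M) ^ N := by positivity
        linarith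

lemma trunc_conv {d : ℕ} {s ε : ℝ} (hs : 0 < s) (hε : 0 < ε) {f ψ : Ed d → ℝ}
    (hf : Integrable f) (hψ : Measurable ψ) {A : ℝ} (hA : ∀ x, |ψ x| ≤ A) (x : Ed d) :
    fracLapTrunc d s (fun x => ∫ z, f z * ψ (x - z)) x ε =
      ∫ z, f z * fracLapTrunc d s ψ (x - z) ε := by
  have hi : ∀ w : Ed d, Integrable (fun z => f z * ψ (w - z)) := fun w =>
    hf.mul_bdd (c := A) (Measurable.aestronglyMeasurable (by fun_prop)) (ae_of_all _ fun z => hA _)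
  simp_rw [trunc_eq]
  calc _ = ∫ h, ∫ z, (kern d s ε h * f z) * (ψ (x - z) - ψ (x - z - h)) := by
        congr 1; ext h
        rw [← integral_sub (hi _) (hi _), ← integral_const_mul]
        congr 1; ext z
        rw [sub_right_comm x h z]; ring
    _ = ∫ z, ∫ h, (kern d s ε h * f z) * (ψ (x - z) - ψ (x - z - h)) := by
        refine integral_integral_swap ?_
        refine ((kern_int d hs hε).mul_prod hf).mul_bdd (c := A + A) ?_ (ae_of_all _ fun p => ?_)
        · exact Measurable.aestronglyMeasurable (by fun_prop)
        · exact (abs_sub _ _).trans (add_le_add (hA _) (hA _))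
    _ = _ := by
        congr 1; ext z
        rw [← integral_const_mul]
        congr 1; ext h; ring

lemma trunc_split {d : ℕ} {s ε : ℝ} (hs : 0 < s) (hε : 0 < ε) {f : Ed d → ℝ} (hf : Measurable f)
    {A : ℝ} (hA : ∀ x, |f x| ≤ A) (x : Ed d) :
    fracLapTrunc d s f x ε = (∫ h, kern d s ε h) * f x - ∫ z, kern d s ε (x - z) * f z := by
  rw [trunc_eq, ← integral_sub_left_eq_self (fun z => kern d s ε (x - z) * f z) volume x,
    ← integral_mul_const, ← integral_sub]
  · congr 1; ext h
    rw [sub_sub_cancel]; ring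
  · exact (kern_int d hs hε).mul_const _
  · simp_rw [sub_sub_cancel]
    exact kern_mul_int hs hε (by fun_prop) fun h => hA _

lemma trunc_selfadj {d : ℕ} {s ε : ℝ} (hs : 0 < s) (hε : 0 < ε) {g ψ : Ed d → ℝ}
    (hψi : Integrable ψ) (hψ : Measurable ψ) {A : ℝ} (hA : ∀ x, |ψ x| ≤ A)
    (hg : Measurable g) {G : ℝ} (hG : ∀ x, |g x| ≤ G) :
    ∫ y, g y * fracLapTrunc d s ψ y ε = ∫ y, ψ y * fracLapTrunc d s g y ε := by
  have hp : Integrable (fun p : Ed d × Ed d => (ψ p.2 * kern d s ε (p.1 - p.2)) * g p.1)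
      (volume.prod volume) := by
    have := hψi.convolution_integrand (ContinuousLinearMap.mul ℝ ℝ) (kern_int d hs hε)
    exact this.mul_bdd (c := G) (Measurable.aestronglyMeasurable (by fun_prop)) (ae_of_all _ fun p => hG _)
  have hgψ : Integrable (fun y => ψ y * g y) :=
    hψi.mul_bdd (c := G) hg.aestronglyMeasurable (ae_of_all _ hG)
  have e1 : ∀ y, g y * fracLapTrunc d s ψ y ε = (∫ h, kern d s ε h) * (ψ y * g y) -
      ∫ z, (ψ z * kern d s ε (y - z)) * g y := by
    intro y
    rw [trunc_split hs hε hψ hA, integral_mul_const]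
    simp_rw [mul_comm (ψ _) (kern _ _ _ _)]
    ring
  have e2 : ∀ z, ψ z * fracLapTrunc d s g z ε = (∫ h, kern d s ε h) * (ψ z * g z) -
      ∫ y, (ψ z * kern d s ε (y - z)) * g y := by
    intro z
    rw [trunc_split hs hε hg hG, mul_sub, ← integral_const_mul]
    congr 1
    · ring
    · congr 1; ext y
      rw [← kern_neg d s ε (y - z), neg_sub]; ring
  simp_rw [e1, e2]
  rw [integral_sub (hgψ.const_mul _) hp.integral_prod_left,
    integral_sub (hgψ.const_mul _) hp.integral_prod_right]
  congr 1
  exact integral_integral_swap hp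

end RieszAux

noncomputable section RieszAux

def PhiR (d : ℕ) (s κ R : ℝ) (ψ : Ed d → ℝ) (x : Ed d) : ℝ := ∫ z, IR d s κ R z * ψ (x - z)

lemma PhiR_smooth {d : ℕ} (hd : 1 ≤ d) {s κ R : ℝ} (hs : 0 < s) (hds : 2 * s < d) (hκ : 0 < κ)
    (hR : 0 < R) {ψ : Ed d → ℝ} (h1 : ContDiff ℝ (⊤ : ℕ∞) ψ) (h2 : HasCompactSupport ψ) :
    ContDiff ℝ (⊤ : ℕ∞) (PhiR d s κ R ψ) ∧ HasCompactSupport (PhiR d s κ R ψ) := by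
  have hI := (IR_int hd hs hds hκ hR).locallyIntegrable
  have hc : HasCompactSupport (IR d s κ R) := by
    refine HasCompactSupport.intro (isCompact_closedBall 0 R) fun z hz => IR_zero hds hR ?_
    simp only [mem_closedBall_zero_iff, not_le] at hz
    exact hz.le
  have e : PhiR d s κ R ψ =
      MeasureTheory.convolution (IR d s κ R) ψ (ContinuousLinearMap.mul ℝ ℝ) volume := by
    ext x
    simp [PhiR, MeasureTheory.convolution]
  rw [e]
  refine ⟨?_, ?_⟩
  · exact h2.contDiff_convolution_right (n := (⊤ : ℕ∞)) (ContinuousLinearMap.mul ℝ ℝ) hI h1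
  · exact HasCompactSupport.convolution (ContinuousLinearMap.mul ℝ ℝ) hc h2

lemma trunc_meas {d : ℕ} (s ε : ℝ) {ψ : Ed d → ℝ} (hψ : Measurable ψ) :
    Measurable (fun y => fracLapTrunc d s ψ y ε) := by
  simp_rw [trunc_eq]
  refine (StronglyMeasurable.integral_prod_right
    (f := fun y h => kern d s ε h * (ψ y - ψ (y - h))) ?_).measurable
  have := kern_meas d s ε
  refine Measurable.stronglyMeasurable ?_
  unfold Function.uncurry
  fun_prop

lemma Lfun_meas {d : ℕ} (s : ℝ) {ψ : Ed d → ℝ} (hψ : Measurable ψ) :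
    Measurable (Lfun d s ψ) := by
  unfold Lfun
  refine (StronglyMeasurable.integral_prod_right
    (f := fun y h => ‖h‖ ^ (-((d:ℝ) + 2 * s)) * ((2 * ψ y - ψ (y - h) - ψ (y + h)) / 2)) ?_).measurable
  refine Measurable.stronglyMeasurable ?_
  unfold Function.uncurry
  fun_prop

lemma Lfun_bound {d : ℕ} (hd : 1 ≤ d) {s : ℝ} (hs : 0 < s) (hs1 : s < 1)
    {ψ : Ed d → ℝ} (h1 : ContDiff ℝ (⊤ : ℕ∞) ψ) (h2 : HasCompactSupport ψ) {K : ℝ}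
    (hK : ∀ ε, 0 < ε → ∀ y,
      |fracLapTrunc d s ψ y ε| ≤ K * (1 + ‖y‖) ^ (-((d:ℝ) + 2 * s))) (y : Ed d) :
    |Lfun d s ψ y| ≤ K * (1 + ‖y‖) ^ (-((d:ℝ) + 2 * s)) := by
  obtain ⟨A, D, hA0, hD0, hA, hD⟩ := SD_smooth h1 h2
  have := trunc_tendsto hd hs hs1 h1.continuous.measurable hA one_pos hD y
  refine le_of_tendsto this.abs ?_
  filter_upwards [self_mem_nhdsWithin] with ε hε using hK ε hε y

lemma dec_int (d : ℕ) {s : ℝ} (hs : 0 < s) (K : ℝ) (x : Ed d) :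
    Integrable (fun z : Ed d => K * (1 + ‖x - z‖) ^ (-((d:ℝ) + 2 * s))) := by
  have : Integrable (fun z : Ed d => (1 + ‖z‖) ^ (-((d:ℝ) + 2 * s))) :=
    integrable_one_add_norm (by simp; linarith)
  exact (this.comp_sub_left x).const_mul K

lemma dec_le {d : ℕ} {s : ℝ} (hs : 0 < s) {K : ℝ} (hK : 0 ≤ K) (x : Ed d) :
    K * (1 + ‖x‖) ^ (-((d:ℝ) + 2 * s)) ≤ K := by
  refine mul_le_of_le_one_right hK ?_
  have : (0:ℝ) ≤ d := by positivity
  exact Real.rpow_le_one_of_one_le_of_nonpos (by linarith [norm_nonneg x]) (by linarith)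

/-- Convergence of `∫ f(z) T_ε ψ(x-z)`, with `f` integrable or bounded. -/
lemma conv_trunc_tendsto {d : ℕ} (hd : 1 ≤ d) {s : ℝ} (hs : 0 < s) (hs1 : s < 1)
    {ψ : Ed d → ℝ} (h1 : ContDiff ℝ (⊤ : ℕ∞) ψ) (h2 : HasCompactSupport ψ)
    {f : Ed d → ℝ} (hf : Measurable f) {K : ℝ}
    (hK : ∀ ε, 0 < ε → ∀ y,
      |fracLapTrunc d s ψ y ε| ≤ K * (1 + ‖y‖) ^ (-((d:ℝ) + 2 * s))) (x : Ed d)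
    (hi : Integrable (fun z => |f z| * (K * (1 + ‖x - z‖) ^ (-((d:ℝ) + 2 * s))))) :
    Tendsto (fun ε => ∫ z, f z * fracLapTrunc d s ψ (x - z) ε) (𝓝[>] (0:ℝ))
      (𝓝 (∫ z, f z * Lfun d s ψ (x - z))) := by
  obtain ⟨A, D, hA0, hD0, hA, hD⟩ := SD_smooth h1 h2
  refine tendsto_integral_filter_of_dominated_convergence _ ?_ ?_ hi ?_
  · refine Eventually.of_forall fun ε => ?_
    exact (hf.mul ((trunc_meas s ε h1.continuous.measurable).comp
      (measurable_const.sub measurable_id))).aestronglyMeasurable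
  · filter_upwards [self_mem_nhdsWithin] with ε hε
    refine ae_of_all _ fun z => ?_
    rw [norm_mul, Real.norm_eq_abs, Real.norm_eq_abs]
    gcongr
    exact hK ε hε _
  · refine ae_of_all _ fun z => ?_
    exact (trunc_tendsto hd hs hs1 h1.continuous.measurable hA one_pos hD (x - z)).const_mul _

lemma IR_dec_int {d : ℕ} (hd : 1 ≤ d) {s κ R : ℝ} (hs : 0 < s) (hds : 2 * s < d) (hκ : 0 < κ)
    (hR : 0 < R) {K : ℝ} (hK : 0 ≤ K) (x : Ed d) :
    Integrable (fun z => |IR d s κ R z| * (K * (1 + ‖x - z‖) ^ (-((d:ℝ) + 2 * s)))) := by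
  refine (IR_int hd hs hds hκ hR).abs.mul_bdd (c := K)
    (Measurable.aestronglyMeasurable (by fun_prop)) (ae_of_all _ fun z => ?_)
  rw [Real.norm_of_nonneg (by positivity)]
  exact dec_le hs hK _

lemma JR_dec_int {d : ℕ} {s κ R : ℝ} (hs : 0 < s) (hds : 2 * s < d) (hκ : 0 < κ)
    (hR : 0 < R) {K : ℝ} (x : Ed d) :
    Integrable (fun z => |JR d s κ R z| * (K * (1 + ‖x - z‖) ^ (-((d:ℝ) + 2 * s)))) := by
  refine (dec_int d hs K x).bdd_mul (c := κ * R ^ (-((d:ℝ) - 2 * s)) * (1 + ((d:ℝ) - 2 * s) / 2))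
    (JR_meas d s κ R).norm.aestronglyMeasurable (ae_of_all _ fun z => ?_)
  simpa using JR_abs hds hκ hR z

lemma mul_Lfun_int {d : ℕ} (hd : 1 ≤ d) {s : ℝ} (hs : 0 < s) (hs1 : s < 1)
    {ψ : Ed d → ℝ} (h1 : ContDiff ℝ (⊤ : ℕ∞) ψ) (h2 : HasCompactSupport ψ)
    {f : Ed d → ℝ} (hf : Measurable f) {K : ℝ}
    (hK : ∀ ε, 0 < ε → ∀ y,
      |fracLapTrunc d s ψ y ε| ≤ K * (1 + ‖y‖) ^ (-((d:ℝ) + 2 * s))) (x : Ed d)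
    (hi : Integrable (fun z => |f z| * (K * (1 + ‖x - z‖) ^ (-((d:ℝ) + 2 * s))))) :
    Integrable (fun z => f z * Lfun d s ψ (x - z)) := by
  refine hi.mono' (hf.mul ((Lfun_meas s h1.continuous.measurable).comp
      (measurable_const.sub measurable_id))).aestronglyMeasurable (ae_of_all _ fun z => ?_)
  rw [norm_mul, Real.norm_eq_abs, Real.norm_eq_abs]
  gcongr
  exact Lfun_bound hd hs hs1 h1 h2 hK _

lemma fracLap_PhiR {d : ℕ} (hd : 1 ≤ d) {s κ R : ℝ} (hs : 0 < s) (hs1 : s < 1)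
    (hds : 2 * s < d) (hκ : 0 < κ) (hR : 0 < R) (Cds : ℝ)
    {ψ : Ed d → ℝ} (h1 : ContDiff ℝ (⊤ : ℕ∞) ψ) (h2 : HasCompactSupport ψ) (x : Ed d) :
    fracLap d s Cds (PhiR d s κ R ψ) x = Cds * ∫ z, IR d s κ R z * Lfun d s ψ (x - z) := by
  obtain ⟨A, D, hA0, hD0, hA, hD⟩ := SD_smooth h1 h2
  obtain ⟨K, hK0, hK⟩ := trunc_decay hd hs hs1 h1 h2
  refine fracLap_eq ?_
  refine (conv_trunc_tendsto hd hs hs1 h1 h2 (IR_meas d s κ R) hK x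
    (IR_dec_int hd hs hds hκ hR hK0 x)).congr' ?_
  filter_upwards [self_mem_nhdsWithin] with ε hε
  exact (trunc_conv hs hε (IR_int hd hs hds hκ hR) h1.continuous.measurable hA x).symm

lemma green_at {d : ℕ} (hd : 1 ≤ d) {s κ Cds : ℝ} (hs : 0 < s) (hs1 : s < 1)
    (hGreen : ∀ φ : Ed d → ℝ, ContDiff ℝ (⊤ : ℕ∞) φ → HasCompactSupport φ →
      ∫ x : Ed d, (κ * ‖x‖ ^ (-((d:ℝ) - 2 * s))) * fracLap d s Cds φ x = φ 0)
    {ψ : Ed d → ℝ} (h1 : ContDiff ℝ (⊤ : ℕ∞) ψ) (h2 : HasCompactSupport ψ) (x : Ed d) :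
    ψ x = Cds * ∫ z, Ik d s κ z * Lfun d s ψ (x - z) := by
  obtain ⟨A, D, hA0, hD0, hA, hD⟩ := SD_smooth h1 h2
  have hc : HasCompactSupport (fun z => ψ (x - z)) :=
    h2.comp_homeomorph (Homeomorph.subLeft x)
  have hg := hGreen (fun z => ψ (x - z)) (h1.comp (contDiff_const.sub contDiff_id)) hc
  rw [sub_zero] at hg
  rw [← hg, ← integral_const_mul]
  congr 1; ext z
  have hm : Measurable (fun z => ψ (x - z)) :=
    h1.continuous.measurable.comp (measurable_const.sub measurable_id)
  rw [fracLap_eq (trunc_tendsto hd hs hs1 hm (fun z => hA (x - z)) one_pos (SD_refl hD x) z)]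
  have : Lfun d s (fun z => ψ (x - z)) z = Lfun d s ψ (x - z) := by
    unfold Lfun
    congr 1; ext h
    beta_reduce
    rw [show x - (z - h) = x - z + h by abel, show x - (z + h) = x - z - h by abel]
    ring
  rw [this]; unfold Ik; ring

lemma err_eq {d : ℕ} (hd : 1 ≤ d) {s κ Cds R : ℝ} (hs : 0 < s) (hs1 : s < 1)
    (hds : 2 * s < d) (hκ : 0 < κ) (hR : 0 < R)
    (hGreen : ∀ φ : Ed d → ℝ, ContDiff ℝ (⊤ : ℕ∞) φ → HasCompactSupport φ →
      ∫ x : Ed d, (κ * ‖x‖ ^ (-((d:ℝ) - 2 * s))) * fracLap d s Cds φ x = φ 0)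
    {ψ : Ed d → ℝ} (h1 : ContDiff ℝ (⊤ : ℕ∞) ψ) (h2 : HasCompactSupport ψ) (x : Ed d) :
    ψ x - fracLap d s Cds (PhiR d s κ R ψ) x = Cds * ∫ z, JR d s κ R z * Lfun d s ψ (x - z) := by
  obtain ⟨K, hK0, hK⟩ := trunc_decay hd hs hs1 h1 h2
  have i1 := mul_Lfun_int hd hs hs1 h1 h2 (IR_meas d s κ R) hK x
    (IR_dec_int hd hs hds hκ hR hK0 x)
  have i2 := mul_Lfun_int hd hs hs1 h1 h2 (JR_meas d s κ R) hK x
    (JR_dec_int hs hds hκ hR x)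
  rw [green_at hd hs hs1 hGreen h1 h2 x, fracLap_PhiR hd hs hs1 hds hκ hR Cds h1 h2 x, ← mul_sub]
  congr 1
  have : ∀ z, Ik d s κ z * Lfun d s ψ (x - z) = IR d s κ R z * Lfun d s ψ (x - z) +
      JR d s κ R z * Lfun d s ψ (x - z) := fun z => by unfold IR; ring
  simp_rw [this]
  rw [integral_add i1 i2]; ring

lemma JR_conv_bound {d : ℕ} (hd : 1 ≤ d) {s κ : ℝ} (hs : 0 < s) (hs1 : s < 1)
    (hds : 2 * s < d) (hκ : 0 < κ)
    {ψ : Ed d → ℝ} (h1 : ContDiff ℝ (⊤ : ℕ∞) ψ) (h2 : HasCompactSupport ψ) :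
    ∃ C : ℝ, 0 ≤ C ∧ ∀ R, 0 < R → ∀ x,
      |∫ z, JR d s κ R z * Lfun d s ψ (x - z)| ≤ C * R ^ (-(d:ℝ)) := by
  obtain ⟨A, _, hA0, -, hA, -⟩ := SD_smooth h1 h2
  obtain ⟨K, hK0, hK⟩ := trunc_decay hd hs hs1 h1 h2
  obtain ⟨D, hD0, hD⟩ := JR_SD hds hκ
  have hψi : Integrable ψ := h1.continuous.integrable_of_hasCompactSupport h2
  have hm0 : 0 ≤ ∫ h, mfun d s h := integral_nonneg (mfun_nonneg d s)
  have hI0 : 0 ≤ ∫ x, |ψ x| := integral_nonneg fun _ => abs_nonneg _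
  refine ⟨(∫ x, |ψ x|) * (κ * D * ∫ h, mfun d s h), by positivity, fun R hR x => ?_⟩
  refine le_of_tendsto (conv_trunc_tendsto hd hs hs1 h1 h2 (JR_meas d s κ R) hK x
    (JR_dec_int hs hds hκ hR x)).abs ?_
  filter_upwards [self_mem_nhdsWithin] with ε hε
  have hgm : Measurable (fun y => JR d s κ R (x - y)) :=
    (JR_meas d s κ R).comp (measurable_const.sub measurable_id)
  have e1 : ∫ z, JR d s κ R z * fracLapTrunc d s ψ (x - z) ε =
      ∫ y, ψ y * fracLapTrunc d s (fun y => JR d s κ R (x - y)) y ε := by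
    rw [← trunc_selfadj hs hε hψi h1.continuous.measurable hA hgm
      (fun y => JR_abs hds hκ hR (x - y)), ← integral_sub_left_eq_self _ volume x]
    simp only [sub_sub_cancel]
  rw [e1]
  have hb : ∀ y, |fracLapTrunc d s (fun y => JR d s κ R (x - y)) y ε| ≤
      (κ * D * ∫ h, mfun d s h) * R ^ (-(d:ℝ)) := by
    intro y
    refine (trunc_bound hd hs hs1 hε hgm (fun y => JR_abs hds hκ hR (x - y)) hR
      (SD_refl (hD R hR) x) y).trans (le_of_eq ?_)
    rw [show -(d:ℝ) = -((d:ℝ) - 2 * s) + -(2 * s) by ring, Real.rpow_add hR]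
    ring
  rw [mul_assoc, ← integral_mul_const]
  change ‖∫ y, ψ y * fracLapTrunc d s (fun y => JR d s κ R (x - y)) y ε‖ ≤ _
  refine norm_integral_le_of_norm_le (hψi.abs.mul_const _) (ae_of_all _ fun y => ?_)
  rw [norm_mul, Real.norm_eq_abs, Real.norm_eq_abs]
  gcongr
  exact hb y

lemma err_bound {d : ℕ} (hd : 1 ≤ d) {s κ Cds : ℝ} (hs : 0 < s) (hs1 : s < 1)
    (hds : 2 * s < d) (hκ : 0 < κ) (hC : 0 < Cds)
    (hGreen : ∀ φ : Ed d → ℝ, ContDiff ℝ (⊤ : ℕ∞) φ → HasCompactSupport φ →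
      ∫ x : Ed d, (κ * ‖x‖ ^ (-((d:ℝ) - 2 * s))) * fracLap d s Cds φ x = φ 0)
    {ψ : Ed d → ℝ} (h1 : ContDiff ℝ (⊤ : ℕ∞) ψ) (h2 : HasCompactSupport ψ) :
    ∃ C R₀ : ℝ, 0 ≤ C ∧ 1 ≤ R₀ ∧ ∀ R, R₀ ≤ R → ∀ x,
      |ψ x - fracLap d s Cds (PhiR d s κ R ψ) x| ≤
        C * (R ^ (2 * s) * (R + ‖x‖) ^ (-((d:ℝ) + 2 * s))) := by
  obtain ⟨K, hK0, hK⟩ := trunc_decay hd hs hs1 h1 h2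
  obtain ⟨C1, hC10, hC1⟩ := JR_conv_bound hd hs hs1 hds hκ h1 h2
  obtain ⟨M, hM0, hM⟩ := h2.isCompact.isBounded.exists_pos_norm_lt
  have hM' : ∀ x, M ≤ ‖x‖ → ψ x = 0 := fun x hx => by
    by_contra h
    exact absurd (hM x (subset_tsupport _ h)) (not_lt.2 hx)
  set N : ℝ := (d:ℝ) + 2 * s with hN
  have hN0 : 0 ≤ N := by positivity
  have hI0 : 0 ≤ ∫ z, |IR d s κ 1 z| := integral_nonneg fun _ => abs_nonneg _
  refine ⟨Cds * C1 * 3 ^ N + Cds * (K * 4 ^ N * ∫ z, |IR d s κ 1 z|), max 1 M, by positivity,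
    le_max_left _ _, fun R hR x => ?_⟩
  have hR1 : 1 ≤ R := (le_max_left _ _).trans hR
  have hRM : M ≤ R := (le_max_right _ _).trans hR
  have hR0 : 0 < R := by linarith
  have hRx : 0 < R + ‖x‖ := by positivity
  have hh0 : 0 ≤ R ^ (2 * s) * (R + ‖x‖) ^ (-N) := by positivity
  rcases le_total ‖x‖ (2 * R) with hx | hx
  · rw [err_eq hd hs hs1 hds hκ hR0 hGreen h1 h2, abs_mul, abs_of_pos hC]
    have e1 : R ^ (-(d:ℝ)) ≤ 3 ^ N * (R ^ (2 * s) * (R + ‖x‖) ^ (-N)) := by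
      have : (3 * R) ^ (-N) ≤ (R + ‖x‖) ^ (-N) :=
        Real.rpow_le_rpow_of_nonpos hRx (by linarith) (by linarith)
      calc R ^ (-(d:ℝ)) = 3 ^ N * (R ^ (2 * s) * (3 * R) ^ (-N)) := by
            rw [Real.mul_rpow (by norm_num) hR0.le, Real.rpow_neg (by norm_num : (0:ℝ) ≤ 3),
              show -(d:ℝ) = 2 * s + -N by rw [hN]; ring, Real.rpow_add hR0]
            field_simp
        _ ≤ _ := by gcongr
    calc Cds * |∫ z, JR d s κ R z * Lfun d s ψ (x - z)|
        ≤ Cds * (C1 * (3 ^ N * (R ^ (2 * s) * (R + ‖x‖) ^ (-N)))) := by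
          gcongr
          exact (hC1 R hR0 x).trans (by gcongr)
      _ = (Cds * C1 * 3 ^ N) * (R ^ (2 * s) * (R + ‖x‖) ^ (-N)) := by ring
      _ ≤ _ := by
        gcongr
        have : 0 ≤ Cds * (K * 4 ^ N * ∫ z, |IR d s κ 1 z|) := by positivity
        linarith
  · rw [hM' x (by linarith), zero_sub, abs_neg, fracLap_PhiR hd hs hs1 hds hκ hR0 Cds h1 h2,
      abs_mul, abs_of_pos hC]
    have e2 : |∫ z, IR d s κ R z * Lfun d s ψ (x - z)| ≤
        (∫ z, |IR d s κ R z|) * (K * (4 ^ N * (R + ‖x‖) ^ (-N))) := by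
      rw [← integral_mul_const]
      change ‖∫ z, IR d s κ R z * Lfun d s ψ (x - z)‖ ≤ _
      refine norm_integral_le_of_norm_le ((IR_int hd hs hds hκ hR0).abs.mul_const _)
        (ae_of_all _ fun z => ?_)
      rw [norm_mul, Real.norm_eq_abs, Real.norm_eq_abs]
      rcases le_total R ‖z‖ with hz | hz
      · rw [IR_zero hds hR0 hz]; simp
      · gcongr
        refine (Lfun_bound hd hs hs1 h1 h2 hK _).trans ?_
        gcongr
        have e3 : 4 ^ N * (R + ‖x‖) ^ (-N) = ((R + ‖x‖) / 4) ^ (-N) := by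
          rw [Real.div_rpow hRx.le (by norm_num), Real.rpow_neg (by norm_num : (0:ℝ) ≤ 4)]
          field_simp
        rw [e3]
        refine Real.rpow_le_rpow_of_nonpos (by positivity) ?_ (by linarith)
        have := norm_sub_norm_le x z
        linarith
    rw [IR_L1 hR0] at e2
    calc Cds * |∫ z, IR d s κ R z * Lfun d s ψ (x - z)|
        ≤ Cds * (R ^ (2 * s) * (∫ z, |IR d s κ 1 z|) * (K * (4 ^ N * (R + ‖x‖) ^ (-N)))) := by
          gcongr
      _ = (Cds * (K * 4 ^ N * ∫ z, |IR d s κ 1 z|)) * (R ^ (2 * s) * (R + ‖x‖) ^ (-N)) := by ring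
      _ ≤ _ := by
        gcongr
        have : 0 ≤ Cds * C1 * 3 ^ N := by positivity
        linarith

end RieszAux

noncomputable section RieszAux

lemma wyoung {p a b r : ℝ} (hp : 2 ≤ p) (ha : 0 ≤ a) (hb : 0 ≤ b) (hr : 0 < r) :
    a * b ≤ a ^ (p / (p - 1)) * r ^ (-(p / (p - 1) - 1)) + b ^ p * r := by
  set q := p / (p - 1) with hq
  have hp1 : 0 < p - 1 := by linarith
  have hp0 : 0 < p := by linarith
  have hq1 : 1 ≤ q := by rw [hq, le_div_iff₀ hp1]; linarith
  have hpq : q.HolderConjugate p := (Real.HolderConjugate.conjExponent (by linarith : 1 < p)).symm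
  have h := Real.young_inequality_of_nonneg (a := a * r ^ (-(1 / p))) (b := b * r ^ (1 / p))
    (by positivity) (by positivity) hpq
  have e0 : a * r ^ (-(1 / p)) * (b * r ^ (1 / p)) = a * b := by
    rw [Real.rpow_neg hr.le]
    have := (Real.rpow_pos_of_pos hr (1 / p)).ne'
    field_simp
  have e1 : (a * r ^ (-(1 / p))) ^ q = a ^ q * r ^ (-(q - 1)) := by
    rw [Real.mul_rpow ha (by positivity), ← Real.rpow_mul hr.le]
    congr 2
    rw [hq]; field_simp; ring
  have e2 : (b * r ^ (1 / p)) ^ p = b ^ p * r := by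
    rw [Real.mul_rpow hb (by positivity), ← Real.rpow_mul hr.le]
    congr 1
    rw [one_div_mul_cancel hp0.ne', Real.rpow_one]
  rw [e0, e1, e2] at h
  refine h.trans (add_le_add (div_le_self (by positivity) hq1)
    (div_le_self (by positivity) (by linarith)))

def hfun (d : ℕ) (s R : ℝ) (x : Ed d) : ℝ := R ^ (2 * s) * (R + ‖x‖) ^ (-((d:ℝ) + 2 * s))

lemma hfun_nonneg {d : ℕ} {s R : ℝ} (hR : 1 ≤ R) (x : Ed d) : 0 ≤ hfun d s R x := by
  unfold hfun; positivity

lemma hfun_meas (d : ℕ) (s R : ℝ) : Measurable (hfun d s R) := by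
  unfold hfun; fun_prop

lemma hfun_tendsto {d : ℕ} (hd : 1 ≤ d) {s : ℝ} (hs : 0 < s) (x : Ed d) :
    Tendsto (fun R => hfun d s R x) atTop (𝓝 0) := by
  have hd' : (1:ℝ) ≤ d := by exact_mod_cast hd
  have : Tendsto (fun R : ℝ => R ^ (-(d:ℝ))) atTop (𝓝 0) := tendsto_rpow_neg_atTop (by linarith)
  refine squeeze_zero' ?_ ?_ this
  · filter_upwards [eventually_ge_atTop 1] with R hR using hfun_nonneg hR x
  · filter_upwards [eventually_ge_atTop 1] with R hR
    have hR0 : 0 < R := by linarith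
    unfold hfun
    calc R ^ (2 * s) * (R + ‖x‖) ^ (-((d:ℝ) + 2 * s)) ≤ R ^ (2 * s) * R ^ (-((d:ℝ) + 2 * s)) := by
          gcongr ?_ * ?_
          exact Real.rpow_le_rpow_of_nonpos hR0 (by linarith [norm_nonneg x]) (by linarith)
      _ = _ := by rw [← Real.rpow_add hR0]; congr 1; ring

def gfun (d : ℕ) (m R : ℝ) (x : Ed d) : ℝ := R ^ (m - d) * (R + ‖x‖) ^ (-m)

lemma gfun_scale {d : ℕ} {m R : ℝ} (hR : 0 < R) (x : Ed d) :
    gfun d m R x = R ^ (-(d:ℝ)) * (1 + ‖R⁻¹ • x‖) ^ (-m) := by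
  unfold gfun
  have : R + ‖x‖ = R * (1 + ‖R⁻¹ • x‖) := by
    rw [norm_smul, norm_inv, Real.norm_of_nonneg hR.le]; field_simp
  rw [this, Real.mul_rpow hR.le (by positivity), ← mul_assoc, ← Real.rpow_add hR]
  congr 2; ring

lemma gfun_int {d : ℕ} {m R : ℝ} (hm : (d:ℝ) < m) (hR : 0 < R) : Integrable (gfun d m R) := by
  rw [show gfun d m R = fun x => R ^ (-(d:ℝ)) * (1 + ‖R⁻¹ • x‖) ^ (-m) from
    funext fun x => gfun_scale hR x]
  have : Integrable (fun z : Ed d => (1 + ‖z‖) ^ (-m)) :=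
    integrable_one_add_norm (by simpa using hm)
  exact (this.comp_smul (inv_ne_zero hR.ne')).const_mul _

lemma gfun_integral {d : ℕ} {m R : ℝ} (hR : 0 < R) :
    ∫ x, gfun d m R x = ∫ x : Ed d, (1 + ‖x‖) ^ (-m) := by
  simp_rw [gfun_scale hR]
  rw [integral_const_mul,
    Measure.integral_comp_inv_smul_of_nonneg volume (fun z : Ed d => (1 + ‖z‖) ^ (-m)) hR.le]
  simp only [finrank_euclideanSpace, Fintype.card_fin, smul_eq_mul]
  rw [← mul_assoc, ← Real.rpow_natCast R d, ← Real.rpow_add hR]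
  simp

lemma weight_lower {d : ℕ} (hd : 1 ≤ d) {ρ : Ed d → ℝ} {c C γ₀ γ : ℝ}
    (hw : TwoPowerWeight d ρ c C γ₀ γ) (hγ₀ : 0 ≤ γ₀) (hγ : γ ≤ d) :
    ∀ᵐ x, c * (1 + ‖x‖) ^ (-(d:ℝ)) ≤ ρ x := by
  obtain ⟨hc, -, h1, h2⟩ := hw
  filter_upwards [h1, h2, ae_ne_zero hd] with x h1 h2 hx0
  have hx : 0 < ‖x‖ := norm_pos_iff.2 hx0
  rcases le_or_gt ‖x‖ 1 with h | h
  · refine le_trans ?_ (h1 h).1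
    gcongr
    calc (1 + ‖x‖) ^ (-(d:ℝ)) ≤ 1 :=
          Real.rpow_le_one_of_one_le_of_nonpos (by linarith) (by simp)
      _ ≤ ‖x‖ ^ (-γ₀) := Real.one_le_rpow_of_pos_of_le_one_of_nonpos hx h (by linarith)
  · refine le_trans ?_ (h2 h).1
    gcongr
    calc (1 + ‖x‖) ^ (-(d:ℝ)) ≤ ‖x‖ ^ (-(d:ℝ)) :=
          Real.rpow_le_rpow_of_nonpos hx (by linarith) (by simp)
      _ ≤ ‖x‖ ^ (-γ) := Real.rpow_le_rpow_of_exponent_le h.le (by linarith)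

/-- Pointwise bound of the dual weight of `h_R`. -/
lemma hfun_weight {d : ℕ} {s p c : ℝ} (hp : 2 ≤ p) (hc : 0 < c)
    {ρ : Ed d → ℝ} (hw : ∀ᵐ x, c * (1 + ‖x‖) ^ (-(d:ℝ)) ≤ ρ x) :
    ∀ R, 1 ≤ R → ∀ᵐ x, hfun d s R x ^ (p / (p - 1)) * ρ x ^ (-(p / (p - 1) - 1)) ≤
      c ^ (-(p / (p - 1) - 1)) * gfun d (d + 2 * s * (p / (p - 1))) R x := by
  intro R hR
  have hR0 : 0 < R := by linarith
  set q := p / (p - 1) with hq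
  have hp1 : 0 < p - 1 := by linarith
  have hq1 : 1 ≤ q := by rw [hq, le_div_iff₀ hp1]; linarith
  filter_upwards [hw] with x hx
  have hx0 := norm_nonneg x
  have hRx : 0 < R + ‖x‖ := by positivity
  have h1 : ρ x ^ (-(q - 1)) ≤ c ^ (-(q - 1)) * (R + ‖x‖) ^ ((d:ℝ) * (q - 1)) := by
    calc ρ x ^ (-(q - 1)) ≤ (c * (R + ‖x‖) ^ (-(d:ℝ))) ^ (-(q - 1)) := by
          refine Real.rpow_le_rpow_of_nonpos (by positivity) (le_trans ?_ hx) (by linarith)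
          gcongr ?_ * ?_
          exact Real.rpow_le_rpow_of_nonpos (by positivity) (by linarith) (by simp)
      _ = _ := by
        rw [Real.mul_rpow hc.le (by positivity), ← Real.rpow_mul hRx.le]
        congr 2; ring
  have h2 : hfun d s R x ^ q = R ^ (2 * s * q) * (R + ‖x‖) ^ (-((d:ℝ) + 2 * s) * q) := by
    unfold hfun
    rw [Real.mul_rpow (by positivity) (by positivity), ← Real.rpow_mul hRx.le,
      ← Real.rpow_mul hR0.le]
  rw [h2]
  calc _ ≤ R ^ (2 * s * q) * (R + ‖x‖) ^ (-((d:ℝ) + 2 * s) * q) *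
        (c ^ (-(q - 1)) * (R + ‖x‖) ^ ((d:ℝ) * (q - 1))) := by gcongr
    _ = c ^ (-(q - 1)) * (R ^ (2 * s * q) * ((R + ‖x‖) ^ (-((d:ℝ) + 2 * s) * q) *
        (R + ‖x‖) ^ ((d:ℝ) * (q - 1)))) := by ring
    _ = _ := by
      unfold gfun
      rw [← Real.rpow_add hRx]
      congr 3 <;> ring_nf

lemma v_hfun_int {d : ℕ} {s p c : ℝ} (hs : 0 < s) (hp : 2 ≤ p) (hc : 0 < c)
    {ρ : Ed d → ℝ} (hρ : ∀ x, 0 < ρ x) (hw : ∀ᵐ x, c * (1 + ‖x‖) ^ (-(d:ℝ)) ≤ ρ x)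
    {v : Ed d → ℝ} (hv : MemWLp d p ρ v) {R : ℝ} (hR : 1 ≤ R) :
    Integrable (fun x => |v x| * hfun d s R x) := by
  have hp1 : 0 < p - 1 := by linarith
  have hq : 0 < p / (p - 1) := by positivity
  have hR0 : 0 < R := by linarith
  refine (((gfun_int (m := d + 2 * s * (p / (p - 1))) (by nlinarith) hR0).const_mul
    (c ^ (-(p / (p - 1) - 1)))).add hv.2).mono'
    (hv.1.norm.mul (hfun_meas d s R).aestronglyMeasurable) ?_
  filter_upwards [hfun_weight hp hc hw R hR] with x hx
  rw [Real.norm_of_nonneg (mul_nonneg (abs_nonneg _) (hfun_nonneg hR x)), mul_comm]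
  refine (wyoung hp (hfun_nonneg hR x) (abs_nonneg (v x)) (hρ x)).trans ?_
  simp only [Pi.add_apply]
  gcongr

lemma v_hfun_tendsto {d : ℕ} (hd : 1 ≤ d) {s p c : ℝ} (hs : 0 < s) (hp : 2 ≤ p) (hc : 0 < c)
    {ρ : Ed d → ℝ} (hρ : ∀ x, 0 < ρ x) (hρm : Measurable ρ)
    (hw : ∀ᵐ x, c * (1 + ‖x‖) ^ (-(d:ℝ)) ≤ ρ x)
    {v : Ed d → ℝ} (hv : MemWLp d p ρ v) :
    Tendsto (fun R => ∫ x, |v x| * hfun d s R x) atTop (𝓝 0) := by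
  have hp1 : 0 < p - 1 := by linarith
  set q := p / (p - 1) with hq
  have hq0 : 0 < q := by positivity
  set G : ℝ := c ^ (-(q - 1)) * ∫ x : Ed d, (1 + ‖x‖) ^ (-(d + 2 * s * q)) with hG
  have hG0 : 0 ≤ G := mul_nonneg (by positivity) (integral_nonneg fun x => by positivity)
  -- the dual part
  have hdual : ∀ R, 1 ≤ R → Integrable (fun x => hfun d s R x ^ q * ρ x ^ (-(q - 1))) ∧
      ∫ x, hfun d s R x ^ q * ρ x ^ (-(q - 1)) ≤ G := by
    intro R hR
    have hR0 : 0 < R := by linarith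
    have i1 := (gfun_int (m := d + 2 * s * q) (by nlinarith : (d:ℝ) < d + 2 * s * q) hR0).const_mul
      (c ^ (-(q - 1)))
    have i2 : Integrable (fun x => hfun d s R x ^ q * ρ x ^ (-(q - 1))) := by
      refine i1.mono' ?_ ?_
      · have := hfun_meas d s R
        exact Measurable.aestronglyMeasurable (by fun_prop)
      · filter_upwards [hfun_weight hp hc hw R hR] with x hx
        rw [Real.norm_of_nonneg (mul_nonneg (Real.rpow_nonneg (hfun_nonneg hR x) _)
          (Real.rpow_nonneg (hρ x).le _))]
        exact hx
    refine ⟨i2, ?_⟩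
    rw [hG, ← gfun_integral hR0, ← integral_const_mul]
    exact integral_mono_ae i2 i1 (hfun_weight hp hc hw R hR)
  -- for each `δ`, the remaining part tends to zero
  have hrem : ∀ δ : ℝ, 0 < δ → Tendsto (fun R => ∫ x, max (|v x| * hfun d s R x -
      δ ^ q * (hfun d s R x ^ q * ρ x ^ (-(q - 1)))) 0) atTop (𝓝 0) := by
    intro δ hδ
    have h0 : ∫ x : Ed d, (0:ℝ) = 0 := by simp
    rw [show (𝓝 (0:ℝ)) = 𝓝 (∫ x : Ed d, (0:ℝ)) by rw [h0]]
    refine tendsto_integral_filter_of_dominated_convergence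
      (fun x => δ⁻¹ ^ p * (|v x| ^ p * ρ x)) ?_ ?_ (hv.2.const_mul _) ?_
    · refine Eventually.of_forall fun R => ?_
      have := hfun_meas d s R
      refine AEStronglyMeasurable.sup ?_ aestronglyMeasurable_const
      refine (hv.1.norm.mul this.aestronglyMeasurable).sub ?_
      exact Measurable.aestronglyMeasurable (by fun_prop)
    · filter_upwards [eventually_ge_atTop 1] with R hR
      refine ae_of_all _ fun x => ?_
      rw [Real.norm_of_nonneg (le_max_right _ _)]
      have hh := hfun_nonneg (s := s) hR x
      have hr := hρ x
      refine max_le ?_ (by positivity)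
      have := wyoung hp (a := δ * hfun d s R x) (b := δ⁻¹ * |v x|) (r := ρ x)
        (by positivity) (by positivity) (hρ x)
      rw [← hq, Real.mul_rpow hδ.le hh, Real.mul_rpow (inv_nonneg.2 hδ.le) (abs_nonneg _)] at this
      have e : δ * hfun d s R x * (δ⁻¹ * |v x|) = |v x| * hfun d s R x := by field_simp
      rw [e] at this
      linarith
    · refine ae_of_all _ fun x => ?_
      have h1 : Tendsto (fun R => |v x| * hfun d s R x) atTop (𝓝 0) := by
        simpa using (hfun_tendsto hd hs x).const_mul |v x|
      refine squeeze_zero' (Eventually.of_forall fun R => le_max_right _ _) ?_ h1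
      filter_upwards [eventually_ge_atTop 1] with R hR
      have hh := hfun_nonneg (s := s) hR x
      have hr := hρ x
      refine max_le ?_ (by positivity)
      have : 0 ≤ δ ^ q * (hfun d s R x ^ q * ρ x ^ (-(q - 1))) := by positivity
      linarith
  rw [Metric.tendsto_atTop]
  intro ε hε
  -- choose `δ` with `δ ^ q * G < ε / 2`
  obtain ⟨δ, hδ, hδG⟩ : ∃ δ : ℝ, 0 < δ ∧ δ ^ q * G ≤ ε / 2 := by
    refine ⟨(ε / 2 / (G + 1)) ^ q⁻¹, by positivity, ?_⟩
    rw [← Real.rpow_mul (by positivity), inv_mul_cancel₀ hq0.ne', Real.rpow_one,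
      div_mul_eq_mul_div, div_le_iff₀ (by positivity)]
    nlinarith
  obtain ⟨R₁, hR₁⟩ := (Metric.tendsto_atTop.1 (hrem δ hδ)) (ε / 2) (by positivity)
  refine ⟨max 1 R₁, fun R hR => ?_⟩
  have hR1 : 1 ≤ R := (le_max_left _ _).trans hR
  have h2 := hR₁ R ((le_max_right _ _).trans hR)
  rw [Real.dist_eq, sub_zero] at h2 ⊢
  rw [abs_of_nonneg (integral_nonneg fun x => mul_nonneg (abs_nonneg _) (hfun_nonneg hR1 x))]
  obtain ⟨i2, hi2⟩ := hdual R hR1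
  have i3 := v_hfun_int hs hp hc hρ hw hv hR1
  have i4 := (i3.sub (i2.const_mul (δ ^ q))).sup (integrable_zero (Ed d) ℝ volume)
  have i5 := i2.const_mul (δ ^ q)
  calc ∫ x, |v x| * hfun d s R x ≤ ∫ x, (max (|v x| * hfun d s R x -
      δ ^ q * (hfun d s R x ^ q * ρ x ^ (-(q - 1)))) 0 +
        δ ^ q * (hfun d s R x ^ q * ρ x ^ (-(q - 1)))) := by
        refine integral_mono i3 (i4.add i5) fun x => ?_
        have := le_max_left (|v x| * hfun d s R x -
          δ ^ q * (hfun d s R x ^ q * ρ x ^ (-(q - 1)))) 0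
        beta_reduce
        linarith
    _ = (∫ x, max (|v x| * hfun d s R x -
      δ ^ q * (hfun d s R x ^ q * ρ x ^ (-(q - 1)))) 0) +
        δ ^ q * ∫ x, (hfun d s R x ^ q * ρ x ^ (-(q - 1))) := by
        rw [← integral_const_mul]
        exact integral_add i4 i5
    _ < ε / 2 + δ ^ q * G := by
        refine add_lt_add_of_lt_of_le (lt_of_abs_lt h2) ?_
        gcongr
    _ ≤ ε := by linarith

lemma v_locInt {d : ℕ} {s p c : ℝ} (hs : 0 < s) (hp : 2 ≤ p) (hc : 0 < c)
    {ρ : Ed d → ℝ} (hρ : ∀ x, 0 < ρ x) (hw : ∀ᵐ x, c * (1 + ‖x‖) ^ (-(d:ℝ)) ≤ ρ x)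
    {v : Ed d → ℝ} (hv : MemWLp d p ρ v) : LocallyIntegrable v := by
  have h1 := v_hfun_int hs hp hc hρ hw hv le_rfl
  rw [locallyIntegrable_iff]
  intro k hk
  obtain ⟨M, hM0, hM⟩ := hk.isBounded.exists_pos_norm_le
  have hN : 0 ≤ (d:ℝ) + 2 * s := by positivity
  refine Integrable.mono' ((h1.const_mul ((1 + M) ^ ((d:ℝ) + 2 * s))).integrableOn (s := k))
    hv.1.restrict ?_
  refine (ae_restrict_iff' hk.measurableSet).2 (ae_of_all _ fun x hx => ?_)
  have hx1 := hM x hx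
  have e : (1 + M) ^ (-((d:ℝ) + 2 * s)) ≤ hfun d s 1 x := by
    unfold hfun
    rw [Real.one_rpow, one_mul]
    exact Real.rpow_le_rpow_of_nonpos (by positivity) (by linarith) (by linarith)
  calc ‖v x‖ = (1 + M) ^ ((d:ℝ) + 2 * s) * (|v x| * (1 + M) ^ (-((d:ℝ) + 2 * s))) := by
        rw [Real.rpow_neg (by positivity)]
        have := (Real.rpow_pos_of_pos (by positivity : 0 < 1 + M) ((d:ℝ) + 2 * s)).ne'
        field_simp
        rfl
    _ ≤ _ := by gcongr

lemma V_int {d : ℕ} (hd : 1 ≤ d) {s p : ℝ} (hds : 2 * s < d) (hp : 2 ≤ p)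
    {ρ : Ed d → ℝ} (hρ : ∀ x, 0 < ρ x) (hρm : Measurable ρ) {c C γ₀ γ : ℝ}
    (hw : TwoPowerWeight d ρ c C γ₀ γ) (hγ₀ : γ₀ < d)
    (hγ : (d:ℝ) - (p / 2) * ((d:ℝ) - 2 * s) < γ) {V : Ed d → ℝ}
    (hV : MemWLp d (p / (p - 1)) (fun x => ρ x ^ (-(p / (p - 1) - 1))) V) :
    Integrable (fun x => |V x| * (1 + ‖x‖) ^ (-((d:ℝ) - 2 * s))) := by
  obtain ⟨hc, hcC, h1, h2⟩ := hw
  have hC : 0 < C := hc.trans hcC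
  have ha : 0 < (d:ℝ) - 2 * s := by linarith
  have i1 : Integrable (fun x : Ed d => ((1 + ‖x‖) ^ (-((d:ℝ) - 2 * s))) ^ p * ρ x) := by
    refine integrable_of_inner_outer hd (α := γ₀) (β := γ + ((d:ℝ) - 2 * s) * p) (A := C) (B := C)
      hγ₀ (by nlinarith) (Measurable.aestronglyMeasurable (by fun_prop)) ?_ ?_
    · filter_upwards [h1] with x h1 hx
      have hr := hρ x
      rw [abs_of_nonneg (by positivity)]
      refine le_trans (mul_le_of_le_one_left hr.le ?_) (h1 hx).2
      refine Real.rpow_le_one (by positivity) ?_ (by linarith)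
      exact Real.rpow_le_one_of_one_le_of_nonpos (by linarith [norm_nonneg x]) (by linarith)
    · filter_upwards [h2] with x h2 hx
      have hr := hρ x
      have hx0 : 0 < ‖x‖ := by linarith
      rw [abs_of_nonneg (by positivity)]
      calc ((1 + ‖x‖) ^ (-((d:ℝ) - 2 * s))) ^ p * ρ x ≤
          (‖x‖ ^ (-((d:ℝ) - 2 * s))) ^ p * (C * ‖x‖ ^ (-γ)) := by
            refine mul_le_mul ?_ (h2 hx).2 hr.le (by positivity)
            refine Real.rpow_le_rpow (by positivity) ?_ (by linarith)
            exact Real.rpow_le_rpow_of_nonpos hx0 (by linarith) (by linarith)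
        _ = _ := by
          rw [← Real.rpow_mul hx0.le, mul_left_comm, ← Real.rpow_add hx0]
          congr 2; ring
  refine (hV.2.add i1).mono' (hV.1.norm.mul (Measurable.aestronglyMeasurable (by fun_prop))) ?_
  refine ae_of_all _ fun x => ?_
  rw [Real.norm_of_nonneg (by positivity)]
  exact wyoung hp (abs_nonneg (V x)) (by positivity) (hρ x)

end RieszAux

noncomputable section RieszAux

lemma Ik_neg (d : ℕ) (s κ : ℝ) (z : Ed d) : Ik d s κ (-z) = Ik d s κ z := by
  unfold Ik; rw [norm_neg]

lemma Ipsi_bound {d : ℕ} (hd : 1 ≤ d) {s κ : ℝ} (hs : 0 < s) (hds : 2 * s < d) (hκ : 0 < κ)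
    {ψ : Ed d → ℝ} (h1 : Continuous ψ) (h2 : HasCompactSupport ψ) :
    ∃ C : ℝ, 0 ≤ C ∧ ∀ x, Integrable (fun z => Ik d s κ z * |ψ (x - z)|) ∧
      ∫ z, Ik d s κ z * |ψ (x - z)| ≤ C * (1 + ‖x‖) ^ (-((d:ℝ) - 2 * s)) := by
  have hψi : Integrable ψ := h1.integrable_of_hasCompactSupport h2
  obtain ⟨A, hA⟩ := h1.bounded_above_of_compact_support h2
  obtain ⟨M₀, hM₀, hM₁⟩ := h2.isCompact.isBounded.exists_pos_norm_lt
  obtain ⟨M, hM1, hM⟩ : ∃ M : ℝ, 1 ≤ M ∧ ∀ x, M ≤ ‖x‖ → ψ x = 0 := by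
    refine ⟨max 1 M₀, le_max_left _ _, fun x hx => ?_⟩
    by_contra h
    exact absurd (hM₁ x (subset_tsupport _ h)) (not_lt.2 ((le_max_right _ _).trans hx))
  set a : ℝ := (d:ℝ) - 2 * s with ha
  have ha0 : 0 < a := by linarith
  set B : ℝ := κ * (1:ℝ) ^ (-a) * (1 + a / 2) with hB
  have hB0 : 0 ≤ B := by positivity
  have hψ0 : 0 ≤ ∫ x, |ψ x| := integral_nonneg fun _ => abs_nonneg _
  have hA0 : 0 ≤ A := (norm_nonneg _).trans (hA 0)
  have hI0 : 0 ≤ ∫ z, |IR d s κ 1 z| := integral_nonneg fun _ => abs_nonneg _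
  have hψx : ∀ x, Integrable (fun z => |ψ (x - z)|) := fun x => (hψi.comp_sub_left x).abs
  have hψe : ∀ x, ∫ z, |ψ (x - z)| = ∫ z, |ψ z| := fun x =>
    integral_sub_left_eq_self (fun z => |ψ z|) volume x
  have hdom : ∀ x z, Ik d s κ z * |ψ (x - z)| ≤ |IR d s κ 1 z| * A + B * |ψ (x - z)| := by
    intro x z
    have e : Ik d s κ z = IR d s κ 1 z + JR d s κ 1 z := by unfold IR; ring
    rw [e, add_mul]
    have := JR_abs hds hκ one_pos z
    gcongr
    · exact le_abs_self _
    · exact hA _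
    · exact (le_abs_self _).trans this
  have hdi : ∀ x, Integrable (fun z => |IR d s κ 1 z| * A + B * |ψ (x - z)|) := fun x =>
    ((IR_int hd hs hds hκ one_pos).abs.mul_const A).add ((hψx x).const_mul B)
  have hker : ∀ x, Integrable (fun z => Ik d s κ z * |ψ (x - z)|) := by
    intro x
    refine (hdi x).mono' ?_ (ae_of_all _ fun z => ?_)
    · have := Ik_meas d s κ
      have := h1.measurable
      exact Measurable.aestronglyMeasurable (by fun_prop)
    · rw [Real.norm_of_nonneg (mul_nonneg (Ik_nonneg hκ z) (abs_nonneg _))]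
      exact hdom x z
  set B0 : ℝ := (∫ z, |IR d s κ 1 z|) * A + B * ∫ z, |ψ z| with hB0'
  have hB00 : 0 ≤ B0 := by positivity
  refine ⟨(1 + 2 * M) ^ a * B0 + κ * 4 ^ a * ∫ z, |ψ z|, by positivity, fun x => ⟨hker x, ?_⟩⟩
  have hx0 := norm_nonneg x
  rcases le_total ‖x‖ (2 * M) with hx | hx
  · calc ∫ z, Ik d s κ z * |ψ (x - z)| ≤ ∫ z, (|IR d s κ 1 z| * A + B * |ψ (x - z)|) :=
          integral_mono (hker x) (hdi x) (hdom x)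
      _ = B0 := by
          rw [integral_add ((IR_int hd hs hds hκ one_pos).abs.mul_const A) ((hψx x).const_mul B),
            integral_mul_const, integral_const_mul, hψe]
      _ = ((1 + 2 * M) ^ a * B0) * (1 + 2 * M) ^ (-a) := by
          rw [Real.rpow_neg (by positivity)]
          have := (Real.rpow_pos_of_pos (by positivity : 0 < 1 + 2 * M) a).ne'
          field_simp
      _ ≤ _ := by
          gcongr ?_ * ?_
          · have : 0 ≤ κ * 4 ^ a * ∫ z, |ψ z| := by positivity
            linarith
          · exact Real.rpow_le_rpow_of_nonpos (by positivity) (by linarith) (by linarith)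
  · have hp : ∀ z, Ik d s κ z * |ψ (x - z)| ≤
        κ * 4 ^ a * (1 + ‖x‖) ^ (-a) * |ψ (x - z)| := by
      intro z
      rcases le_or_gt M ‖x - z‖ with hz | hz
      · rw [hM _ hz]; simp
      · gcongr
        unfold Ik
        rw [mul_assoc]
        gcongr
        have e3 : 4 ^ a * (1 + ‖x‖) ^ (-a) = ((1 + ‖x‖) / 4) ^ (-a) := by
          rw [Real.div_rpow (by positivity) (by norm_num), Real.rpow_neg (by norm_num : (0:ℝ) ≤ 4)]
          field_simp
        rw [e3]
        refine Real.rpow_le_rpow_of_nonpos (by positivity) ?_ (by linarith)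
        have := norm_sub_norm_le x z
        linarith
    calc ∫ z, Ik d s κ z * |ψ (x - z)| ≤ ∫ z, κ * 4 ^ a * (1 + ‖x‖) ^ (-a) * |ψ (x - z)| :=
          integral_mono (hker x) ((hψx x).const_mul _) hp
      _ = (κ * 4 ^ a * ∫ z, |ψ z|) * (1 + ‖x‖) ^ (-a) := by
          rw [integral_const_mul, hψe]; ring
      _ ≤ _ := by
          gcongr
          have : 0 ≤ (1 + 2 * M) ^ a * B0 := by positivity
          linarith

def PhiI (d : ℕ) (s κ : ℝ) (ψ : Ed d → ℝ) (x : Ed d) : ℝ := ∫ z, Ik d s κ z * ψ (x - z)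

lemma fub {d : ℕ} (hd : 1 ≤ d) {s κ : ℝ} (hs : 0 < s) (hds : 2 * s < d) (hκ : 0 < κ)
    {V : Ed d → ℝ} (hVm : AEStronglyMeasurable V volume)
    (hV : Integrable (fun x => |V x| * (1 + ‖x‖) ^ (-((d:ℝ) - 2 * s))))
    {ψ : Ed d → ℝ} (h1 : Continuous ψ) (h2 : HasCompactSupport ψ) :
    Integrable (fun x => ψ x * riesz d s κ V x) ∧
      ∫ x, ψ x * riesz d s κ V x = ∫ y, V y * PhiI d s κ ψ y := by
  obtain ⟨C, hC0, hC⟩ := Ipsi_bound hd hs hds hκ h1 h2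
  have hIm := Ik_meas d s κ
  have hψm := h1.measurable
  -- reflected forms
  have hr1 : ∀ (y : Ed d) (f : Ed d → ℝ),
      ∫ x, Ik d s κ (x - y) * f x = ∫ z, Ik d s κ z * f (y - z) := by
    intro y f
    rw [← integral_sub_left_eq_self (fun x => Ik d s κ (x - y) * f x) volume y]
    congr 1; ext z
    rw [show y - z - y = -z by abel, Ik_neg]
  have hr2 : ∀ y : Ed d, Integrable (fun x => Ik d s κ (x - y) * |ψ x|) := by
    intro y
    have := (hC y).1.comp_sub_left y
    refine this.congr (ae_of_all _ fun x => ?_)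
    beta_reduce
    rw [sub_sub_cancel, ← Ik_neg, neg_sub]
  have hF : Integrable (fun z : Ed d × Ed d => V z.2 * (Ik d s κ (z.1 - z.2) * ψ z.1))
      (volume.prod volume) := by
    have hFm : AEStronglyMeasurable (fun z : Ed d × Ed d => V z.2 * (Ik d s κ (z.1 - z.2) * ψ z.1))
        (volume.prod volume) :=
      hVm.comp_snd.mul (Measurable.aestronglyMeasurable (by fun_prop))
    rw [integrable_prod_iff' hFm]
    constructor
    · refine ae_of_all _ fun y => ?_
      have hi : Integrable (fun x => Ik d s κ (x - y) * ψ x) := by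
        refine (hr2 y).mono' (Measurable.aestronglyMeasurable (by fun_prop))
          (ae_of_all _ fun x => ?_)
        rw [norm_mul, Real.norm_of_nonneg (Ik_nonneg hκ _), Real.norm_eq_abs]
      exact hi.const_mul (V y)
    · have e : ∀ y, ∫ x, ‖V y * (Ik d s κ (x - y) * ψ x)‖ =
          |V y| * ∫ z, Ik d s κ z * |ψ (y - z)| := by
        intro y
        rw [← hr1 y (fun x => |ψ x|), ← integral_const_mul]
        congr 1; ext x
        rw [norm_mul, norm_mul, Real.norm_of_nonneg (Ik_nonneg hκ _), Real.norm_eq_abs,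
          Real.norm_eq_abs]
      have hm : AEStronglyMeasurable (fun y => ∫ x, ‖V y * (Ik d s κ (x - y) * ψ x)‖) volume :=
        hFm.norm.prod_swap.integral_prod_right'
      refine (hV.const_mul C).mono' hm (ae_of_all _ fun y => ?_)
      rw [e, Real.norm_of_nonneg (mul_nonneg (abs_nonneg _) (integral_nonneg fun z =>
        mul_nonneg (Ik_nonneg hκ z) (abs_nonneg _)))]
      calc _ ≤ |V y| * (C * (1 + ‖y‖) ^ (-((d:ℝ) - 2 * s))) := by
            gcongr; exact (hC y).2
        _ = _ := by ring
  have e1 : ∀ x, ∫ y, V y * (Ik d s κ (x - y) * ψ x) = ψ x * riesz d s κ V x := by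
    intro x
    unfold riesz
    rw [← integral_const_mul]
    congr 1; ext y
    unfold Ik; ring
  have e2 : ∀ y, ∫ x, V y * (Ik d s κ (x - y) * ψ x) = V y * PhiI d s κ ψ y := by
    intro y
    rw [integral_const_mul, hr1]; rfl
  constructor
  · have := hF.integral_prod_left
    simp only [e1] at this
    exact this
  · have := integral_integral_swap (f := fun x y => V y * (Ik d s κ (x - y) * ψ x)) hF
    simp only [e1, e2] at this
    exact this

lemma riesz_locInt {d : ℕ} (hd : 1 ≤ d) {s κ : ℝ} (hs : 0 < s) (hds : 2 * s < d) (hκ : 0 < κ)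
    {V : Ed d → ℝ} (hVm : AEStronglyMeasurable V volume)
    (hV : Integrable (fun x => |V x| * (1 + ‖x‖) ^ (-((d:ℝ) - 2 * s)))) :
    LocallyIntegrable (riesz d s κ V) := by
  rw [locallyIntegrable_iff]
  intro k hk
  obtain ⟨f, hf1, hf2, -, -⟩ :=
    exists_continuousMap_one_of_isCompact_subset_isOpen hk isOpen_univ (subset_univ k)
  have := (fub hd hs hds hκ hVm hV f.continuous hf2).1.integrableOn (s := k)
  refine this.congr_fun (fun x hx => ?_) hk.measurableSet
  have hx1 := hf1 hx
  simp only [Pi.one_apply] at hx1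
  beta_reduce
  rw [hx1, one_mul]

lemma rhs_tendsto {d : ℕ} (hd : 1 ≤ d) {s κ : ℝ} (hs : 0 < s) (hds : 2 * s < d) (hκ : 0 < κ)
    {V : Ed d → ℝ} (hVm : AEStronglyMeasurable V volume)
    (hV : Integrable (fun x => |V x| * (1 + ‖x‖) ^ (-((d:ℝ) - 2 * s))))
    {ψ : Ed d → ℝ} (h1 : ContDiff ℝ (⊤ : ℕ∞) ψ) (h2 : HasCompactSupport ψ) :
    Tendsto (fun R => ∫ x, V x * PhiR d s κ R ψ x) atTop (𝓝 (∫ x, V x * PhiI d s κ ψ x)) := by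
  obtain ⟨C, hC0, hC⟩ := Ipsi_bound hd hs hds hκ h1.continuous h2
  have hψm := h1.continuous.measurable
  have hψi : Integrable ψ := h1.continuous.integrable_of_hasCompactSupport h2
  set a : ℝ := (d:ℝ) - 2 * s with ha
  have ha0 : 0 < a := by linarith
  refine tendsto_integral_filter_of_dominated_convergence
    (fun x => ((2 + a / 2) * C) * (|V x| * (1 + ‖x‖) ^ (-a))) ?_ ?_ (hV.const_mul _) ?_
  · filter_upwards [eventually_gt_atTop 0] with R hR
    exact hVm.mul (PhiR_smooth hd hs hds hκ hR h1 h2).1.continuous.aestronglyMeasurable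
  · filter_upwards [eventually_gt_atTop 0] with R hR
    refine ae_of_all _ fun x => ?_
    have hb : ‖PhiR d s κ R ψ x‖ ≤ (2 + a / 2) * ∫ z, Ik d s κ z * |ψ (x - z)| := by
      unfold PhiR
      rw [← integral_const_mul]
      refine norm_integral_le_of_norm_le ((hC x).1.const_mul _) ?_
      filter_upwards [ae_ne_zero hd] with z hz
      rw [norm_mul, Real.norm_eq_abs, Real.norm_eq_abs, ← mul_assoc]
      gcongr
      exact IR_le hds hκ hR hz
    rw [norm_mul, Real.norm_eq_abs]
    calc |V x| * ‖PhiR d s κ R ψ x‖ ≤ |V x| * ((2 + a / 2) * (C * (1 + ‖x‖) ^ (-a))) := by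
          gcongr
          refine hb.trans ?_
          gcongr
          exact (hC x).2
      _ = _ := by ring
  · refine ae_of_all _ fun x => ?_
    refine Tendsto.const_mul _ ?_
    rw [tendsto_iff_norm_sub_tendsto_zero]
    have ht : Tendsto (fun R : ℝ => κ * R ^ (-a) * (1 + a / 2) * ∫ z, |ψ (x - z)|) atTop (𝓝 0) := by
      have := tendsto_rpow_neg_atTop ha0
      simpa using ((this.const_mul κ).mul_const (1 + a / 2)).mul_const (∫ z, |ψ (x - z)|)
    refine squeeze_zero' (Eventually.of_forall fun R => norm_nonneg _) ?_ ht
    filter_upwards [eventually_gt_atTop 0] with R hR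
    have i1 : Integrable (fun z => Ik d s κ z * ψ (x - z)) := by
      have := Ik_meas d s κ
      refine (hC x).1.mono' (Measurable.aestronglyMeasurable (by fun_prop)) (ae_of_all _ fun z => ?_)
      rw [norm_mul, Real.norm_of_nonneg (Ik_nonneg hκ _), Real.norm_eq_abs]
    have i2 : Integrable (fun z => JR d s κ R z * ψ (x - z)) :=
      (hψi.comp_sub_left x).bdd_mul (c := κ * R ^ (-a) * (1 + a / 2))
        (JR_meas d s κ R).aestronglyMeasurable (ae_of_all _ fun z => JR_abs hds hκ hR z)
    have e : PhiR d s κ R ψ x - PhiI d s κ ψ x = - ∫ z, JR d s κ R z * ψ (x - z) := by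
      unfold PhiR PhiI IR
      simp_rw [sub_mul]
      rw [integral_sub i1 i2]; ring
    rw [e, norm_neg, ← integral_const_mul]
    refine norm_integral_le_of_norm_le ((hψi.comp_sub_left x).abs.const_mul _)
      (ae_of_all _ fun z => ?_)
    rw [norm_mul, Real.norm_eq_abs, Real.norm_eq_abs]
    gcongr
    exact JR_abs hds hκ hR z

lemma lhs_tendsto {d : ℕ} (hd : 1 ≤ d) {s κ Cds : ℝ} (hs : 0 < s) (hs1 : s < 1)
    (hds : 2 * s < d) (hκ : 0 < κ) (hC : 0 < Cds)
    (hGreen : ∀ φ : Ed d → ℝ, ContDiff ℝ (⊤ : ℕ∞) φ → HasCompactSupport φ →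
      ∫ x : Ed d, (κ * ‖x‖ ^ (-((d:ℝ) - 2 * s))) * fracLap d s Cds φ x = φ 0)
    {p c : ℝ} (hp : 2 ≤ p) (hc : 0 < c)
    {ρ : Ed d → ℝ} (hρ : ∀ x, 0 < ρ x) (hρm : Measurable ρ)
    (hw : ∀ᵐ x, c * (1 + ‖x‖) ^ (-(d:ℝ)) ≤ ρ x)
    {v : Ed d → ℝ} (hv : MemWLp d p ρ v)
    {ψ : Ed d → ℝ} (h1 : ContDiff ℝ (⊤ : ℕ∞) ψ) (h2 : HasCompactSupport ψ) :
    Tendsto (fun R => ∫ x, v x * fracLap d s Cds (PhiR d s κ R ψ) x) atTop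
      (𝓝 (∫ x, ψ x * v x)) := by
  obtain ⟨C, R₀, hC0, hR₀, hCb⟩ := err_bound hd hs hs1 hds hκ hC hGreen h1 h2
  have hψm := h1.continuous.measurable
  have iψ : Integrable (fun x => ψ x * v x) :=
    (v_locInt hs hp hc hρ hw hv).integrable_smul_left_of_hasCompactSupport h1.continuous h2
  rw [tendsto_iff_norm_sub_tendsto_zero]
  have ht := (v_hfun_tendsto hd hs hp hc hρ hρm hw hv).const_mul C
  rw [mul_zero] at ht
  refine squeeze_zero' (Eventually.of_forall fun R => norm_nonneg _) ?_ ht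
  filter_upwards [eventually_ge_atTop R₀] with R hR
  have hR1 : 1 ≤ R := hR₀.trans hR
  have hR0 : 0 < R := by linarith
  set E : Ed d → ℝ := fun x => ψ x - fracLap d s Cds (PhiR d s κ R ψ) x with hE
  have hEm : Measurable E := by
    have : E = fun x => Cds * ∫ z, JR d s κ R z * Lfun d s ψ (x - z) :=
      funext fun x => err_eq hd hs hs1 hds hκ hR0 hGreen h1 h2 x
    rw [this]
    have hJ := JR_meas d s κ R
    have hL := Lfun_meas (d := d) s hψm
    refine Measurable.const_mul ?_ _
    refine (StronglyMeasurable.integral_prod_right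
      (f := fun x z => JR d s κ R z * Lfun d s ψ (x - z)) ?_).measurable
    refine Measurable.stronglyMeasurable ?_
    unfold Function.uncurry
    fun_prop
  have iv := (v_hfun_int hs hp hc hρ hw hv hR1).const_mul C
  have hb : ∀ x, ‖v x * E x‖ ≤ C * (|v x| * hfun d s R x) := by
    intro x
    rw [norm_mul, Real.norm_eq_abs, Real.norm_eq_abs]
    calc |v x| * |E x| ≤ |v x| * (C * hfun d s R x) := by
          gcongr; exact hCb R hR x
      _ = _ := by ring
  have iE : Integrable (fun x => v x * E x) :=
    iv.mono' (hv.1.mul hEm.aestronglyMeasurable) (ae_of_all _ hb)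
  have e : ∀ x, v x * fracLap d s Cds (PhiR d s κ R ψ) x = ψ x * v x - v x * E x := fun x => by
    rw [hE]; ring
  simp_rw [e]
  rw [integral_sub iψ iE, sub_sub_cancel_left, norm_neg, ← integral_const_mul]
  exact norm_integral_le_of_norm_le iv (ae_of_all _ hb)

end RieszAux

theorem stmt18 (d : ℕ) (hd : 1 ≤ d) (s : ℝ) (hs : s ∈ Set.Ioo (0:ℝ) 1)
    (hds : 2 * s < (d:ℝ)) (Cds : ℝ) (hC : 0 < Cds)
    (p : ℝ) (hp1 : 2 ≤ p) (hp2 : p ≤ 2 * d / ((d:ℝ) - 2 * s))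
    (ρ : Ed d → ℝ) (hρpos : ∀ x, 0 < ρ x) (hρm : Measurable ρ)
    (c C γ₀ γ : ℝ) (hw : TwoPowerWeight d ρ c C γ₀ γ)
    (hγ₀ : γ₀ ∈ Set.Ico (0:ℝ) d)
    (hγ : γ ∈ Set.Ioc ((d:ℝ) - (p / 2) * ((d:ℝ) - 2 * s)) (d:ℝ))
    (κ : ℝ) (hκ : 0 < κ)
    (hGreen : ∀ φ : Ed d → ℝ, ContDiff ℝ (⊤ : ℕ∞) φ → HasCompactSupport φ →
      ∫ x : Ed d, (κ * ‖x‖ ^ (-((d:ℝ) - 2 * s))) * fracLap d s Cds φ x = φ 0) :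
    ∀ v V : Ed d → ℝ, MemX d s Cds p ρ v V →
      ∀ᵐ x : Ed d, v x = riesz d s κ V x := by
  intro v V hX
  obtain ⟨hv, hdist, hV⟩ := hX
  have hwl := weight_lower hd hw hγ₀.1 hγ.2
  have hc := hw.1
  have hVi := V_int hd hds hp1 hρpos hρm hw hγ₀.2 hγ.1 hV
  refine ae_eq_of_integral_contDiff_smul_eq (v_locInt hs.1 hp1 hc hρpos hwl hv)
    (riesz_locInt hd hs.1 hds hκ hV.1 hVi) fun ψ h1 h2 => ?_
  simp only [smul_eq_mul]
  have h3 := lhs_tendsto hd hs.1 hs.2 hds hκ hC hGreen hp1 hc hρpos hρm hwl hv h1 h2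
  have h4 := rhs_tendsto hd hs.1 hds hκ hV.1 hVi h1 h2
  rw [(fub hd hs.1 hds hκ hV.1 hVi h1.continuous h2).2]
  refine tendsto_nhds_unique h3 (h4.congr' ?_)
  filter_upwards [eventually_gt_atTop 0] with R hR
  obtain ⟨h5, h6⟩ := PhiR_smooth hd hs.1 hds hκ hR h1 h2
  exact (hdist _ h5 h6).symm
end

section
/- Let d > 2s with s ∈ (0,1), p ∈ [2, 2d/(d−2s)], and suppose ρ satisfies the two-power bounds with γ_0 ∈ [0,d) and γ ∈ (d, d+ps]. Then the integration-by-parts formula fails in X_{p,s,ρ}: there exist v, w ∈ X_{p,s,ρ} with ∫ v (−Δ)^s w dx ≠ ∫ (−Δ)^s v · w dx. In fact, the constant function 1 lies in X_{p,s,ρ} with (−Δ)^s 1 = 0, while for any nonnegative nontrivial φ ∈ C_c^∞(ℝ^d) the Riesz potential Φ = I_{d,s} ∗ φ lies in X_{p,s,ρ} with (−Δ)^s Φ = φ; taking v = 1, w = Φ gives 0 = ∫ (−Δ)^s(1) Φ dx ≠ ∫ 1 · (−Δ)^s Φ dx = ∫ φ dx > 0. -/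
open MeasureTheory Filter Metric Set
open scoped Topology ENNReal

open Real in
lemma aux_env (d : ℕ) (hd : 1 ≤ d) (a b : ℝ) (ha : a < d) (hb : (d:ℝ) < b) :
    Integrable (fun x : Ed d => if ‖x‖ ≤ 1 then ‖x‖ ^ (-a) else ‖x‖ ^ (-b)) := by
  have : Nonempty (Fin d) := ⟨⟨0, hd⟩⟩
  have : Nontrivial (Ed d) := inferInstance
  have := (integrable_fun_norm_addHaar (volume : Measure (Ed d))
    (f := fun r : ℝ => if r ≤ 1 then r ^ (-a) else r ^ (-b))).2
  apply this
  have hcast : ((d - 1 : ℕ) : ℝ) = (d:ℝ) - 1 := by push_cast [Nat.cast_sub hd]; ring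
  rw [← Set.Ioc_union_Ioi_eq_Ioi (zero_le_one' ℝ)]
  refine IntegrableOn.union ?_ ?_
  · have h1 : IntegrableOn (fun x : ℝ => x ^ ((d:ℝ) - 1 - a)) (Ioc 0 1) := by
      rw [integrableOn_Ioc_iff_integrableOn_Ioo]
      exact (intervalIntegral.integrableOn_Ioo_rpow_iff zero_lt_one).2 (by linarith)
    refine h1.congr_fun (fun x hx => ?_) measurableSet_Ioc
    simp only [finrank_euclideanSpace, Fintype.card_fin, hx.2, if_true, smul_eq_mul]
    rw [← Real.rpow_natCast, ← Real.rpow_add hx.1, hcast]; ring_nf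
  · have h1 : IntegrableOn (fun x : ℝ => x ^ ((d:ℝ) - 1 - b)) (Ioi 1) :=
      integrableOn_Ioi_rpow_of_lt (by linarith) zero_lt_one
    refine h1.congr_fun (fun x hx => ?_) measurableSet_Ioi
    have hx1 : (1:ℝ) < x := hx
    simp only [finrank_euclideanSpace, Fintype.card_fin, not_le.2 hx1, if_false, smul_eq_mul]
    rw [← Real.rpow_natCast, ← Real.rpow_add (by linarith), hcast]; ring_nf

lemma aux_gauss (d : ℕ) (hd : 1 ≤ d) (q b : ℝ) (hq : -(d:ℝ) < q) (hb : 0 < b) :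
    Integrable (fun x : Ed d => ‖x‖ ^ q * Real.exp (-b * ‖x‖ ^ 2)) := by
  have : Nonempty (Fin d) := ⟨⟨0, hd⟩⟩
  have : Nontrivial (Ed d) := inferInstance
  have := (integrable_fun_norm_addHaar (volume : Measure (Ed d))
    (f := fun r : ℝ => r ^ q * Real.exp (-b * r ^ 2))).2
  apply this
  have hcast : ((d - 1 : ℕ) : ℝ) = (d:ℝ) - 1 := by push_cast [Nat.cast_sub hd]; ring
  have h1 := integrableOn_rpow_mul_exp_neg_mul_sq hb (s := (d:ℝ) - 1 + q) (by linarith)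
  refine h1.congr_fun (fun x hx => ?_) measurableSet_Ioi
  have hx1 : (0:ℝ) < x := hx
  simp only [finrank_euclideanSpace, Fintype.card_fin, smul_eq_mul]
  rw [← Real.rpow_natCast x (d-1), ← mul_assoc, ← Real.rpow_add hx1, hcast]

lemma aux_second (d : ℕ) (φ : Ed d → ℝ) (h : ContDiff ℝ (⊤ : ℕ∞) φ) (hc : HasCompactSupport φ) :
    ∃ M : ℝ, 0 ≤ M ∧ ∀ x z, |2 * φ x - φ (x + z) - φ (x - z)| ≤ M * ‖z‖ ^ 2 := by
  have h1 : ContDiff ℝ 1 (fderiv ℝ φ) := h.fderiv_right (by norm_cast)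
  obtain ⟨K, hK⟩ := ContDiff.lipschitzWith_of_hasCompactSupport (hc.fderiv (𝕜 := ℝ)) h1 (by simp)
  have key : ∀ x z, |φ (x + z) - φ x - fderiv ℝ φ x z| ≤ K * ‖z‖ ^ 2 := by
    intro x z
    have := (convex_closedBall x ‖z‖).norm_image_sub_le_of_norm_hasFDerivWithin_le'
      (f := φ) (f' := fderiv ℝ φ) (φ := fderiv ℝ φ x) (C := K * ‖z‖) (x := x) (y := x + z)
      (fun y _ => ((h.differentiable (by simp)) y).hasFDerivAt.hasFDerivWithinAt)
      (fun y hy => by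
        have := hK.dist_le_mul y x
        rw [dist_eq_norm] at this
        refine this.trans ?_
        gcongr
        exact hy) (by simp) (by simp)
    simp only [add_sub_cancel_left, Real.norm_eq_abs] at this
    linarith [this]
  refine ⟨2 * K, by positivity, fun x z => ?_⟩
  have a := key x z
  have b := key x (-z)
  simp only [map_neg, norm_neg, ← sub_eq_add_neg] at b
  rw [abs_le] at *
  constructor <;> linarith

/-- singular kernel -/
noncomputable def aux_K (d : ℕ) (s : ℝ) (z : Ed d) : ℝ := ‖z‖ ^ (-((d:ℝ) + 2 * s))

/-- second difference -/
noncomputable def aux_D (d : ℕ) (φ : Ed d → ℝ) (x z : Ed d) : ℝ := 2 * φ x - φ (x + z) - φ (x - z)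

lemma aux_K_nonneg (d : ℕ) (s : ℝ) (z : Ed d) : 0 ≤ aux_K d s z := by
  unfold aux_K; positivity

lemma aux_K_meas (d : ℕ) (s : ℝ) : Measurable (aux_K d s) := by
  unfold aux_K; fun_prop

/-- dominating function -/
noncomputable def aux_E (d : ℕ) (s : ℝ) (z : Ed d) : ℝ :=
  if ‖z‖ ≤ 1 then ‖z‖ ^ (-((d:ℝ) + 2 * s - 2)) else ‖z‖ ^ (-((d:ℝ) + 2 * s))

lemma aux_E_int (d : ℕ) (hd : 1 ≤ d) (s : ℝ) (hs : s ∈ Set.Ioo (0:ℝ) 1) :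
    Integrable (aux_E d s) :=
  aux_env d hd _ _ (by linarith [hs.2]) (by linarith [hs.1])

lemma aux_dom (d : ℕ) (s : ℝ) (z : Ed d) (t A B : ℝ) (hA : |t| ≤ A * ‖z‖ ^ 2) (hB : |t| ≤ B) :
    |t * aux_K d s z| ≤ max A B * aux_E d s z := by
  rw [abs_mul, abs_of_nonneg (aux_K_nonneg d s z)]
  by_cases hz : z = 0
  · subst hz
    have : |t| ≤ 0 := by simpa using hA
    have ht : |t| = 0 := le_antisymm this (abs_nonneg _)
    rw [ht, zero_mul]
    have : 0 ≤ B := by linarith [abs_nonneg t]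
    have : 0 ≤ aux_E d s (0 : Ed d) := by unfold aux_E; split_ifs <;> positivity
    positivity
  have hz' : 0 < ‖z‖ := norm_pos_iff.2 hz
  unfold aux_E
  split_ifs with h
  · have : ‖z‖ ^ (-((d:ℝ) + 2 * s - 2)) = ‖z‖ ^ 2 * aux_K d s z := by
      unfold aux_K
      rw [← Real.rpow_natCast, ← Real.rpow_add hz']; congr 1; push_cast; ring
    rw [this, ← mul_assoc]
    refine mul_le_mul_of_nonneg_right (hA.trans ?_) (aux_K_nonneg d s z)
    gcongr; exact le_max_left _ _
  · refine mul_le_mul_of_nonneg_right (hB.trans (le_max_right _ _)) (aux_K_nonneg d s z)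

lemma aux_bdd (d : ℕ) (φ : Ed d → ℝ) (h : Continuous φ) (hc : HasCompactSupport φ) :
    ∃ S : ℝ, ∀ x, |φ x| ≤ S := by
  obtain ⟨S, hS⟩ := hc.exists_bound_of_continuous h
  exact ⟨S, fun x => by simpa using hS x⟩

lemma aux_DK_int (d : ℕ) (hd : 1 ≤ d) (s : ℝ) (hs : s ∈ Set.Ioo (0:ℝ) 1) (φ : Ed d → ℝ)
    (h : ContDiff ℝ (⊤ : ℕ∞) φ) (hc : HasCompactSupport φ) (x : Ed d) :
    Integrable (fun z => aux_D d φ x z * aux_K d s z) := by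
  obtain ⟨M, hM0, hM⟩ := aux_second d φ h hc
  obtain ⟨S, hS⟩ := aux_bdd d φ h.continuous hc
  have hφ := h.continuous
  refine ((aux_E_int d hd s hs).const_mul (max M (4 * S))).mono' ?_ ?_
  · refine (Measurable.mul ?_ (aux_K_meas d s)).aestronglyMeasurable
    unfold aux_D; exact Continuous.measurable (by fun_prop)
  · refine Eventually.of_forall fun z => ?_
    refine aux_dom d s z _ _ _ (hM x z) ?_
    unfold aux_D
    have h1 := hS x; have h2 := hS (x + z); have h3 := hS (x - z)
    rw [abs_le] at *
    constructor <;> linarith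

lemma aux_prod_int (d : ℕ) (hd : 1 ≤ d) (s : ℝ) (hs : s ∈ Set.Ioo (0:ℝ) 1) (φ : Ed d → ℝ)
    (h : ContDiff ℝ (⊤ : ℕ∞) φ) (hc : HasCompactSupport φ) :
    Integrable (Function.uncurry fun (x z : Ed d) => aux_D d φ x z * aux_K d s z)
      ((volume : Measure (Ed d)).prod volume) := by
  obtain ⟨M, hM0, hM⟩ := aux_second d φ h hc
  have hφ := h.continuous
  have hφi : Integrable φ := hφ.integrable_of_hasCompactSupport hc
  have hp (z : Ed d) : Integrable (fun x => φ (x + z)) := hφi.comp_add_right z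
  have hm (z : Ed d) : Integrable (fun x => φ (x - z)) := hφi.comp_sub_right z
  have hD (z : Ed d) : Integrable (fun x => aux_D d φ x z) :=
    ((hφi.const_mul 2).sub (hp z)).sub (hm z)
  have hmeas : AEStronglyMeasurable
      (Function.uncurry fun (x z : Ed d) => aux_D d φ x z * aux_K d s z)
      ((volume : Measure (Ed d)).prod volume) := by
    refine Measurable.aestronglyMeasurable ?_
    have h1 : Measurable (fun q : Ed d × Ed d => aux_D d φ q.1 q.2) := by
      unfold aux_D; exact Continuous.measurable (by fun_prop)
    exact h1.mul ((aux_K_meas d s).comp measurable_snd)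
  rw [integrable_prod_iff' hmeas]
  refine ⟨Eventually.of_forall fun z => (hD z).mul_const (aux_K d s z), ?_⟩
  obtain ⟨R, hR⟩ := hc.isCompact.isBounded.subset_closedBall (0 : Ed d)
  -- the two bounds for the L^1 norm of the second difference
  have b1 (z : Ed d) : abs (∫ x, |aux_D d φ x z|) ≤ 4 * ∫ x, |φ x| := by
    rw [abs_of_nonneg (integral_nonneg fun _ => abs_nonneg _)]
    have e1 : ∫ x, |φ (x + z)| = ∫ x, |φ x| := integral_add_right_eq_self (fun x => |φ x|) z
    have e2 : ∫ x, |φ (x - z)| = ∫ x, |φ x| := integral_sub_right_eq_self (fun x => |φ x|) z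
    calc ∫ x, |aux_D d φ x z| ≤ ∫ x, (2 * |φ x| + |φ (x + z)| + |φ (x - z)|) := by
          refine integral_mono (hD z).abs
            (((hφi.abs.const_mul 2).add (hp z).abs).add (hm z).abs) fun x => ?_
          show |aux_D d φ x z| ≤ 2 * |φ x| + |φ (x + z)| + |φ (x - z)|
          unfold aux_D
          have h1 := abs_le.1 (le_refl |φ x|)
          have h2 := abs_le.1 (le_refl |φ (x + z)|)
          have h3 := abs_le.1 (le_refl |φ (x - z)|)
          rw [abs_le]; constructor <;> linarith [h1.1, h1.2, h2.1, h2.2, h3.1, h3.2]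
      _ = 4 * ∫ x, |φ x| := by
          have hadd : Integrable (fun x => 2 * |φ x| + |φ (x + z)|) :=
            (hφi.abs.const_mul 2).add (hp z).abs
          rw [integral_add hadd (hm z).abs,
            integral_add (hφi.abs.const_mul 2) (hp z).abs, integral_const_mul, e1, e2]; ring
  set Vol := (volume : Measure (Ed d)).real (closedBall (0:Ed d) (R + 1)) with hVol
  have b2 (z : Ed d) (hz : ‖z‖ ≤ 1) : abs (∫ x, |aux_D d φ x z|) ≤ (M * Vol) * ‖z‖ ^ 2 := by
    have hsupp : ∀ x ∉ closedBall (0:Ed d) (R + 1), |aux_D d φ x z| = 0 := by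
      intro x hx
      have hx' : R + 1 < ‖x‖ := by simpa using hx
      have hz0 : ∀ y : Ed d, R < ‖y‖ → φ y = 0 := fun y hy => by
        apply image_eq_zero_of_notMem_tsupport
        intro hmem
        have := hR hmem
        simp at this; linarith
      have n1 : ‖x‖ ≤ ‖x + z‖ + ‖z‖ := by simpa using norm_sub_le (x + z) z
      have n2 : ‖x‖ ≤ ‖x - z‖ + ‖z‖ := by simpa using norm_add_le (x - z) z
      unfold aux_D
      rw [hz0 x (by linarith), hz0 (x+z) (by linarith), hz0 (x-z) (by linarith)]; simp
    rw [← setIntegral_eq_integral_of_forall_compl_eq_zero hsupp]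
    have := norm_setIntegral_le_of_norm_le_const (μ := (volume : Measure (Ed d)))
      (s := closedBall (0:Ed d) (R + 1)) (f := fun x => |aux_D d φ x z|) (C := M * ‖z‖ ^ 2)
      measure_closedBall_lt_top (fun x _ => by
        rw [Real.norm_eq_abs, abs_abs]; exact hM x z)
    rw [Real.norm_eq_abs] at this
    refine this.trans (le_of_eq ?_)
    rw [hVol]; ring
  have hnn : (0:ℝ) ≤ ∫ x, |φ x| := integral_nonneg fun _ => abs_nonneg _
  refine ((aux_E_int d hd s hs).const_mul (max (max (M * Vol) (4 * ∫ x, |φ x|)) (4 * ∫ x, |φ x|))).mono'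
    hmeas.norm.prod_swap.integral_prod_right' ?_
  refine Eventually.of_forall fun z => ?_
  have e : ∫ x, ‖Function.uncurry (fun (x z : Ed d) => aux_D d φ x z * aux_K d s z) (x, z)‖
      = (∫ x, |aux_D d φ x z|) * aux_K d s z := by
    rw [← integral_mul_const]
    congr 1; ext x
    simp [Function.uncurry, abs_of_nonneg (aux_K_nonneg d s z)]
  rw [e, Real.norm_eq_abs]
  refine aux_dom d s z _ _ _ ?_ (b1 z)
  by_cases hz : ‖z‖ ≤ 1
  · refine (b2 z hz).trans ?_
    gcongr; exact le_max_left _ _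
  · refine (b1 z).trans ?_
    have h1 : (1:ℝ) ≤ ‖z‖ ^ 2 := by nlinarith [not_le.1 hz]
    have h2 : 4 * ∫ x, |φ x| ≤ max (M * Vol) (4 * ∫ x, |φ x|) := le_max_right _ _
    nlinarith

lemma aux_trunc (d : ℕ) (hd : 1 ≤ d) (s : ℝ) (hs : s ∈ Set.Ioo (0:ℝ) 1) (φ : Ed d → ℝ)
    (h : ContDiff ℝ (⊤ : ℕ∞) φ) (hc : HasCompactSupport φ) (x : Ed d) (ε : ℝ) (hε : 0 < ε) :
    fracLapTrunc d s φ x ε =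
      (1/2) * ∫ z, {z : Ed d | ε ≤ ‖z‖}.indicator (fun z => aux_D d φ x z * aux_K d s z) z := by
  obtain ⟨S, hS⟩ := aux_bdd d φ h.continuous hc
  have hS0 : 0 ≤ S := (abs_nonneg _).trans (hS 0)
  have hφ := h.continuous
  have hset : MeasurableSet {z : Ed d | ε ≤ ‖z‖} := measurableSet_le measurable_const measurable_norm
  set F : Ed d → ℝ := {z : Ed d | ε ≤ ‖z‖}.indicator (fun z => (φ x - φ (x + z)) * aux_K d s z)
    with hF
  have hFi : Integrable F := by
    refine ((aux_E_int d hd s hs).const_mul (max (2 * S / ε ^ 2) (2 * S))).mono' ?_ ?_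
    · refine (Measurable.indicator (Measurable.mul ?_ (aux_K_meas d s)) hset).aestronglyMeasurable
      exact Continuous.measurable (by fun_prop)
    · refine Eventually.of_forall fun z => ?_
      have e : F z = ({z : Ed d | ε ≤ ‖z‖}.indicator (fun z => φ x - φ (x + z)) z) * aux_K d s z := by
        rw [hF]; by_cases hz : z ∈ {z : Ed d | ε ≤ ‖z‖} <;> simp [hz]
      rw [e, Real.norm_eq_abs]
      have hb : |φ x - φ (x + z)| ≤ 2 * S := by
        have h1 := hS x; have h2 := hS (x + z)
        rw [abs_le] at *; constructor <;> linarith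
      apply aux_dom
      · by_cases hz : ε ≤ ‖z‖
        · rw [Set.indicator_of_mem (by exact hz)]
          refine hb.trans ?_
          rw [div_mul_eq_mul_div, le_div_iff₀ (by positivity)]
          gcongr
        · rw [Set.indicator_of_notMem (by exact hz)]
          simp; positivity
      · by_cases hz : ε ≤ ‖z‖
        · rw [Set.indicator_of_mem (by exact hz)]; exact hb
        · rw [Set.indicator_of_notMem (by exact hz)]
          simp; positivity
  have e1 : fracLapTrunc d s φ x ε = ∫ z, F z := by
    unfold fracLapTrunc
    rw [← integral_sub_right_eq_self F x, ← integral_indicator]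
    · congr 1; ext y
      simp only [hF, Set.indicator, Set.mem_ofPred_eq, dist_eq_norm, norm_sub_rev x y,
        add_sub_cancel]
      split_ifs
      · unfold aux_K; rw [Real.rpow_neg (norm_nonneg _)]; rfl
      · rfl
    · exact measurableSet_le measurable_const (by fun_prop)
  have e2 : ∫ z, F (-z) = ∫ z, F z := integral_neg_eq_self F volume
  have e3 : ∫ z, {z : Ed d | ε ≤ ‖z‖}.indicator (fun z => aux_D d φ x z * aux_K d s z) z
      = (∫ z, F z) + ∫ z, F (-z) := by
    rw [← integral_add hFi hFi.comp_neg]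
    congr 1; ext z
    simp only [hF, Set.indicator, Set.mem_ofPred_eq, norm_neg]
    split_ifs
    · unfold aux_D aux_K; rw [norm_neg, ← sub_eq_add_neg]; ring
    · simp
  rw [e3, e2, e1]; ring

lemma aux_fracLap (d : ℕ) (hd : 1 ≤ d) (s : ℝ) (hs : s ∈ Set.Ioo (0:ℝ) 1) (Cds : ℝ) (φ : Ed d → ℝ)
    (h : ContDiff ℝ (⊤ : ℕ∞) φ) (hc : HasCompactSupport φ) (x : Ed d) :
    fracLap d s Cds φ x = Cds * ((1/2) * ∫ z, aux_D d φ x z * aux_K d s z) := by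
  unfold fracLap
  congr 1
  apply Tendsto.limUnder_eq
  have hT : Tendsto (fun ε : ℝ => (1/2) * ∫ z, {z : Ed d | ε ≤ ‖z‖}.indicator
      (fun z => aux_D d φ x z * aux_K d s z) z) (𝓝[>] 0)
      (𝓝 ((1/2) * ∫ z, aux_D d φ x z * aux_K d s z)) := by
    apply Tendsto.const_mul
    have hi := aux_DK_int d hd s hs φ h hc x
    refine tendsto_integral_filter_of_dominated_convergence
      (fun z => ‖aux_D d φ x z * aux_K d s z‖) ?_ ?_ hi.norm ?_
    · refine Eventually.of_forall fun ε => hi.aestronglyMeasurable.indicator ?_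
      exact measurableSet_le measurable_const measurable_norm
    · exact Eventually.of_forall fun ε => Eventually.of_forall fun z => norm_indicator_le_norm_self _ _
    · refine Eventually.of_forall fun z => ?_
      by_cases hz : z = 0
      · have : aux_D d φ x z = 0 := by subst hz; unfold aux_D; simp; ring
        simp [Set.indicator, this]
      · refine tendsto_const_nhds.congr' ?_
        have : ∀ᶠ ε in 𝓝[>] (0:ℝ), ε < ‖z‖ :=
          nhdsWithin_le_nhds (Iio_mem_nhds (norm_pos_iff.2 hz))
        filter_upwards [this] with ε hε
        rw [Set.indicator_of_mem]; exact hε.le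
  refine hT.congr' ?_
  filter_upwards [self_mem_nhdsWithin] with ε hε
  rw [aux_trunc d hd s hs φ h hc x ε hε]

lemma aux_fracLap_int (d : ℕ) (hd : 1 ≤ d) (s : ℝ) (hs : s ∈ Set.Ioo (0:ℝ) 1) (Cds : ℝ)
    (φ : Ed d → ℝ) (h : ContDiff ℝ (⊤ : ℕ∞) φ) (hc : HasCompactSupport φ) :
    Integrable (fracLap d s Cds φ) := by
  have : fracLap d s Cds φ = fun x => Cds * ((1/2) * ∫ z, aux_D d φ x z * aux_K d s z) := by
    ext x; exact aux_fracLap d hd s hs Cds φ h hc x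
  rw [this]
  exact ((aux_prod_int d hd s hs φ h hc).integral_prod_left.const_mul _).const_mul _

/-- the Fourier multiplier -/
noncomputable def aux_m (d : ℕ) (s : ℝ) (ξ : Ed d) : ℝ :=
  ∫ z : Ed d, (1 - Real.cos (2 * Real.pi * inner ℝ z ξ)) * aux_K d s z

open Real in
lemma aux_m_int (d : ℕ) (hd : 1 ≤ d) (s : ℝ) (hs : s ∈ Set.Ioo (0:ℝ) 1) (ξ : Ed d) :
    Integrable (fun z : Ed d => (1 - Real.cos (2 * Real.pi * inner ℝ z ξ)) * aux_K d s z) := by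
  refine ((aux_E_int d hd s hs).const_mul (max ((2 * π) ^ 2 * ‖ξ‖ ^ 2 / 2) 2)).mono' ?_ ?_
  · refine (Measurable.mul ?_ (aux_K_meas d s)).aestronglyMeasurable
    exact Continuous.measurable (by fun_prop)
  · refine Eventually.of_forall fun z => ?_
    have h1 := Real.cos_le_one (2 * π * inner ℝ z ξ)
    have h2 := Real.neg_one_le_cos (2 * π * inner ℝ z ξ)
    have h3 := Real.one_sub_sq_div_two_le_cos (x := 2 * π * inner ℝ z ξ)
    have h4 : (inner ℝ z ξ) ^ 2 ≤ ‖z‖ ^ 2 * ‖ξ‖ ^ 2 := by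
      rw [← mul_pow, ← sq_abs]
      have := abs_real_inner_le_norm z ξ
      gcongr
    rw [Real.norm_eq_abs]
    apply aux_dom
    · rw [abs_of_nonneg (by linarith)]
      have : (2 * π * inner ℝ z ξ) ^ 2 ≤ (2 * π) ^ 2 * (‖z‖ ^ 2 * ‖ξ‖ ^ 2) := by
        rw [mul_pow]; gcongr
      linarith
    · rw [abs_of_nonneg (by linarith)]; linarith

lemma aux_m_zero (d : ℕ) (s : ℝ) : aux_m d s 0 = 0 := by simp [aux_m]

lemma aux_m_rot (d : ℕ) (s : ℝ) (ξ η : Ed d) (h : ‖ξ‖ = ‖η‖) : aux_m d s ξ = aux_m d s η := by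
  set A := (ℝ ∙ (ξ - η))ᗮ.reflection with hA
  have hAξ : A ξ = η := Submodule.reflection_sub h
  unfold aux_m
  rw [← (A.measurePreserving).integral_comp A.toHomeomorph.measurableEmbedding
    (fun z => (1 - Real.cos (2 * Real.pi * inner ℝ z η)) * aux_K d s z)]
  congr 1; ext z
  rw [← hAξ, LinearIsometryEquiv.inner_map_map]
  unfold aux_K
  rw [LinearIsometryEquiv.norm_map]

lemma aux_m_scale (d : ℕ) (s : ℝ) (ξ : Ed d) (r : ℝ) (hr : 0 < r) :
    aux_m d s (r • ξ) = r ^ (2 * s) * aux_m d s ξ := by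
  unfold aux_m
  have := Measure.integral_comp_smul_of_nonneg (volume : Measure (Ed d))
    (fun z => (1 - Real.cos (2 * Real.pi * inner ℝ z ξ)) * aux_K d s z) r (hR := hr.le)
  rw [finrank_euclideanSpace, Fintype.card_fin] at this
  have e : ∀ z : Ed d, (1 - Real.cos (2 * Real.pi * inner ℝ z (r • ξ))) * aux_K d s z
     = r ^ ((d:ℝ) + 2 * s) * ((1 - Real.cos (2 * Real.pi * inner ℝ (r • z) ξ)) * aux_K d s (r • z)) := by
    intro z
    unfold aux_K
    rw [inner_smul_right, real_inner_smul_left, norm_smul, Real.norm_of_nonneg hr.le,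
      Real.mul_rpow hr.le (norm_nonneg _), Real.rpow_neg hr.le]
    have : r ^ ((d:ℝ) + 2 * s) ≠ 0 := by positivity
    field_simp
  simp_rw [e]
  rw [integral_const_mul, this, smul_eq_mul, ← mul_assoc, Real.rpow_add hr, Real.rpow_natCast]
  congr 1
  have : r ^ d ≠ 0 := by positivity
  field_simp

lemma aux_m_form (d : ℕ) (hd : 1 ≤ d) (s : ℝ) (hs : s ∈ Set.Ioo (0:ℝ) 1) :
    ∃ c : ℝ, 0 < c ∧ ∀ ξ : Ed d, aux_m d s ξ = c * ‖ξ‖ ^ (2 * s) := by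
  have : Nonempty (Fin d) := ⟨⟨0, hd⟩⟩
  have : Nontrivial (Ed d) := inferInstance
  obtain ⟨e, he⟩ := exists_norm_eq (Ed d) (zero_le_one' ℝ)
  have hee : inner ℝ e e = (1:ℝ) := by rw [real_inner_self_eq_norm_sq, he]; norm_num
  refine ⟨aux_m d s e, ?_, fun ξ => ?_⟩
  · unfold aux_m
    rw [integral_pos_iff_support_of_nonneg _ (aux_m_int d hd s hs e)]
    · have hopen : IsOpen ({z : Ed d | Real.cos (2 * Real.pi * inner ℝ z e) < 1} ∩ {0}ᶜ) := by
        refine IsOpen.inter ?_ isOpen_compl_singleton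
        exact isOpen_lt (by fun_prop) continuous_const
      have hne : ({z : Ed d | Real.cos (2 * Real.pi * inner ℝ z e) < 1} ∩ {0}ᶜ).Nonempty := by
        refine ⟨(1/2 : ℝ) • e, ?_, ?_⟩
        · have : 2 * Real.pi * (1 / 2 * 1) = Real.pi := by ring
          rw [Set.mem_ofPred_eq, real_inner_smul_left, hee, this, Real.cos_pi]; norm_num
        · have : e ≠ 0 := by intro h; simp [h] at he
          simp [this]
      refine (hopen.measure_pos volume hne).trans_le (measure_mono ?_)
      rintro z ⟨hz1, hz2⟩
      have hz1' : Real.cos (2 * Real.pi * inner ℝ z e) < 1 := hz1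
      have hz : 0 < ‖z‖ := norm_pos_iff.2 hz2
      rw [Function.mem_support]
      refine mul_ne_zero (by linarith) ?_
      unfold aux_K; positivity
    · intro z
      exact mul_nonneg (by linarith [Real.cos_le_one (2 * Real.pi * inner ℝ z e)])
        (aux_K_nonneg d s z)
  · by_cases hξ : ξ = 0
    · subst hξ; rw [aux_m_zero, norm_zero, Real.zero_rpow (by linarith [hs.1]), mul_zero]
    · have : aux_m d s ξ = aux_m d s (‖ξ‖ • e) := aux_m_rot d s _ _ (by simp [norm_smul, he])
      rw [this, aux_m_scale d s e _ (norm_pos_iff.2 hξ), mul_comm]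

/-- character -/
noncomputable def aux_e (d : ℕ) (ξ x : Ed d) : ℂ :=
  Complex.exp ((↑(-2 * Real.pi * inner ℝ x ξ) : ℂ) * Complex.I)

lemma aux_e_cont (d : ℕ) (ξ : Ed d) : Continuous (aux_e d ξ) := by
  unfold aux_e
  fun_prop

lemma aux_e_norm (d : ℕ) (ξ x : Ed d) : ‖aux_e d ξ x‖ = 1 := by
  unfold aux_e; exact Complex.norm_exp_ofReal_mul_I _

lemma aux_e_add (d : ℕ) (ξ x y : Ed d) : aux_e d ξ (x + y) = aux_e d ξ x * aux_e d ξ y := by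
  unfold aux_e; rw [← Complex.exp_add, inner_add_left]; congr 1; push_cast; ring

lemma aux_e_sum (d : ℕ) (ξ z : Ed d) :
    2 - aux_e d ξ (-z) - aux_e d ξ z
      = ((2 * (1 - Real.cos (2 * Real.pi * inner ℝ z ξ)) : ℝ) : ℂ) := by
  unfold aux_e
  rw [inner_neg_left]
  have h1 : ((-2 * Real.pi * -inner ℝ z ξ : ℝ) : ℂ) = ((2 * Real.pi * inner ℝ z ξ : ℝ) : ℂ) := by
    congr 1; ring
  have h2 : ((-2 * Real.pi * inner ℝ z ξ : ℝ) : ℂ) = -((2 * Real.pi * inner ℝ z ξ : ℝ) : ℂ) := by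
    push_cast; ring
  rw [h1, h2]
  generalize 2 * Real.pi * inner ℝ z ξ = t
  rw [Complex.ofReal_mul, Complex.ofReal_sub, Complex.ofReal_cos, Complex.cos]
  push_cast; ring

/-- Fourier transform of a real function -/
noncomputable def aux_F (d : ℕ) (f : Ed d → ℂ) (ξ : Ed d) : ℂ := ∫ x, aux_e d ξ x * f x

lemma aux_F_eq (d : ℕ) (f : Ed d → ℂ) : FourierTransform.fourier f = aux_F d f := by
  ext ξ; rw [Real.fourier_eq']; rfl

lemma aux_F_selfadj (d : ℕ) (f g : Ed d → ℂ) (hf : Integrable f) (hg : Integrable g) :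
    ∫ x, aux_F d f x * g x = ∫ x, f x * aux_F d g x := by
  rw [← aux_F_eq, ← aux_F_eq]
  simpa using! (VectorFourier.integral_fourierIntegral_smul_eq_flip (L := innerₗ (Ed d))
      Real.continuous_fourierChar continuous_inner hf hg)

lemma aux_mul_int (d : ℕ) (ξ : Ed d) (f : Ed d → ℂ) (hf : Integrable f) :
    Integrable (fun x => aux_e d ξ x * f x) := by
  refine hf.bdd_mul (c := 1) (aux_e_cont d ξ).aestronglyMeasurable ?_
  exact Eventually.of_forall fun x => (aux_e_norm d ξ x).le

lemma aux_F_shift (d : ℕ) (ξ z : Ed d) (f : Ed d → ℂ) :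
    ∫ x, aux_e d ξ x * f (x + z) = aux_e d ξ (-z) * aux_F d f ξ := by
  unfold aux_F
  rw [← integral_const_mul, ← integral_add_right_eq_self (fun x => aux_e d ξ (-z) * (aux_e d ξ x * f x)) z]
  congr 1; ext x
  rw [← mul_assoc, ← aux_e_add]; congr 2; abel

lemma aux_F_D (d : ℕ) (ξ z : Ed d) (φ : Ed d → ℝ) (hφi : Integrable φ) :
    ∫ x, aux_e d ξ x * (aux_D d φ x z : ℂ) =
      ((2 * (1 - Real.cos (2 * Real.pi * inner ℝ z ξ)) : ℝ) : ℂ) * aux_F d (fun x => (φ x : ℂ)) ξ := by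
  have hi : Integrable (fun x => (φ x : ℂ)) := hφi.ofReal
  have i1 := aux_mul_int d ξ _ hi
  have i2 := aux_mul_int d ξ _ (hi.comp_add_right z)
  have i3 := aux_mul_int d ξ _ (hi.comp_add_right (-z))
  have e : ∀ x, aux_e d ξ x * (aux_D d φ x z : ℂ) = 2 * (aux_e d ξ x * (φ x : ℂ))
      - aux_e d ξ x * (φ (x + z) : ℂ) - aux_e d ξ x * (φ (x + -z) : ℂ) := by
    intro x; unfold aux_D; push_cast; rw [← sub_eq_add_neg]; ring
  simp_rw [e]
  have i12 : Integrable (fun x => 2 * (aux_e d ξ x * (φ x : ℂ))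
      - aux_e d ξ x * (φ (x + z) : ℂ)) := (i1.const_mul 2).sub i2
  rw [integral_sub i12 i3, integral_sub (i1.const_mul 2) i2, integral_const_mul,
    aux_F_shift d ξ z (fun x => (φ x : ℂ)), aux_F_shift d ξ (-z) (fun x => (φ x : ℂ)), neg_neg,
    ← aux_e_sum]
  unfold aux_F; ring

lemma aux_F_fracLap (d : ℕ) (hd : 1 ≤ d) (s : ℝ) (hs : s ∈ Set.Ioo (0:ℝ) 1) (Cds : ℝ)
    (φ : Ed d → ℝ) (h : ContDiff ℝ (⊤ : ℕ∞) φ) (hc : HasCompactSupport φ) (ξ : Ed d) :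
    aux_F d (fun x => (fracLap d s Cds φ x : ℂ)) ξ
      = ((Cds * aux_m d s ξ : ℝ) : ℂ) * aux_F d (fun x => (φ x : ℂ)) ξ := by
  have hφi : Integrable φ := h.continuous.integrable_of_hasCompactSupport hc
  have hP := (aux_prod_int d hd s hs φ h hc).ofReal (𝕜 := ℂ)
  have hP2 : Integrable (Function.uncurry fun (x z : Ed d) =>
      aux_e d ξ x * ((aux_D d φ x z * aux_K d s z : ℝ) : ℂ))
      ((volume : Measure (Ed d)).prod volume) := by
    refine hP.bdd_mul (c := 1) (f := fun q : Ed d × Ed d => aux_e d ξ q.1)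
      ((aux_e_cont d ξ).comp continuous_fst).aestronglyMeasurable ?_
    exact Eventually.of_forall fun x => (aux_e_norm d ξ x.1).le
  have e1 : ∀ x, aux_e d ξ x * (fracLap d s Cds φ x : ℂ)
      = ((Cds * (1/2) : ℝ) : ℂ) *
        ∫ z, aux_e d ξ x * ((aux_D d φ x z * aux_K d s z : ℝ) : ℂ) := by
    intro x
    rw [aux_fracLap d hd s hs Cds φ h hc x, integral_const_mul, integral_complex_ofReal]
    push_cast; ring
  have e2 : ∀ z, ∫ x, aux_e d ξ x * ((aux_D d φ x z * aux_K d s z : ℝ) : ℂ)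
      = ((2 * ((1 - Real.cos (2 * Real.pi * inner ℝ z ξ)) * aux_K d s z) : ℝ) : ℂ)
        * aux_F d (fun x => (φ x : ℂ)) ξ := by
    intro z
    have := aux_F_D d ξ z φ hφi
    calc ∫ x, aux_e d ξ x * ((aux_D d φ x z * aux_K d s z : ℝ) : ℂ)
        = ∫ x, (aux_e d ξ x * (aux_D d φ x z : ℂ)) * (aux_K d s z : ℂ) := by
          congr 1; ext x; push_cast; ring
      _ = _ := by rw [integral_mul_const, this]; push_cast; ring
  rw [aux_F]
  simp_rw [e1]
  rw [integral_const_mul, integral_integral_swap hP2]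
  simp_rw [e2]
  rw [integral_mul_const, integral_complex_ofReal, integral_const_mul]
  unfold aux_m
  push_cast; ring

lemma aux_int_fracLap (d : ℕ) (hd : 1 ≤ d) (s : ℝ) (hs : s ∈ Set.Ioo (0:ℝ) 1) (Cds : ℝ)
    (φ : Ed d → ℝ) (h : ContDiff ℝ (⊤ : ℕ∞) φ) (hc : HasCompactSupport φ) :
    ∫ x, fracLap d s Cds φ x = 0 := by
  have := aux_F_fracLap d hd s hs Cds φ h hc 0
  rw [aux_m_zero] at this
  simp only [aux_F, aux_e, inner_zero_right, mul_zero, Complex.ofReal_zero, zero_mul,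
    Complex.exp_zero, one_mul] at this
  rw [integral_complex_ofReal] at this
  exact_mod_cast this

/-- The Gaussian. -/
noncomputable def aux_G (d : ℕ) (x : Ed d) : ℝ := Real.exp (-Real.pi * ‖x‖ ^ 2)

lemma aux_G_int (d : ℕ) (hd : 1 ≤ d) : Integrable (aux_G d) := by
  have h1 := aux_gauss d hd 0 Real.pi
    (by have : (1:ℝ) ≤ d := by exact_mod_cast hd
        linarith) Real.pi_pos
  refine h1.congr (Eventually.of_forall fun x => ?_)
  simp [aux_G]

lemma aux_F_G (d : ℕ) (x : Ed d) : aux_F d (fun x => (aux_G d x : ℂ)) x = aux_G d x := by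
  rw [← aux_F_eq]
  have := fourier_gaussian_innerProductSpace (V := Ed d) (b := (Real.pi : ℂ))
    (by simpa using Real.pi_pos) x
  have hpi : (Real.pi : ℂ) ≠ 0 := by exact_mod_cast Real.pi_ne_zero
  rw [div_self hpi, Complex.one_cpow, one_mul] at this
  have e : (fun x : Ed d => (aux_G d x : ℂ)) = fun v : Ed d => Complex.exp (-Real.pi * ‖v‖ ^ 2) := by
    ext v; simp [aux_G]
  rw [e, this]
  simp only [aux_G]
  push_cast
  congr 1
  field_simp

/-- The symbol of the slowly decaying function. -/
noncomputable def aux_g (d : ℕ) (s : ℝ) (ξ : Ed d) : ℝ := ‖ξ‖ ^ (-(2 * s)) * aux_G d ξ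

/-- The slowly decaying function, `(-Δ)^{-s}` of a Gaussian up to a constant. -/
noncomputable def aux_w (d : ℕ) (s : ℝ) (x : Ed d) : ℝ := (aux_F d (fun ξ => (aux_g d s ξ : ℂ)) x).re

lemma aux_g_int (d : ℕ) (hd : 1 ≤ d) (s : ℝ) (hds : 2 * s < (d:ℝ)) : Integrable (aux_g d s) :=
  aux_gauss d hd (-(2 * s)) Real.pi (by linarith) Real.pi_pos

lemma aux_w_cont (d : ℕ) (hd : 1 ≤ d) (s : ℝ) (hds : 2 * s < (d:ℝ)) :
    Continuous (aux_F d (fun ξ => (aux_g d s ξ : ℂ))) := by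
  rw [← aux_F_eq]
  exact VectorFourier.fourierIntegral_continuous (L := innerₗ (Ed d))
      Real.continuous_fourierChar continuous_inner ((aux_g_int d hd s hds).ofReal (𝕜 := ℂ))

lemma aux_w_bdd (d : ℕ) (s : ℝ) :
    ∃ B : ℝ, ∀ x, ‖aux_F d (fun ξ => (aux_g d s ξ : ℂ)) x‖ ≤ B := by
  refine ⟨∫ ξ, ‖aux_g d s ξ‖, fun x => ?_⟩
  unfold aux_F
  refine (norm_integral_le_integral_norm _).trans (le_of_eq ?_)
  congr 1; ext ξ
  rw [norm_mul, aux_e_norm, one_mul, Complex.norm_real]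

lemma aux_w_dist (d : ℕ) (hd : 1 ≤ d) (s : ℝ) (hs : s ∈ Set.Ioo (0:ℝ) 1)
    (hds : 2 * s < (d:ℝ)) (Cds c : ℝ)
    (hc : ∀ ξ : Ed d, aux_m d s ξ = c * ‖ξ‖ ^ (2 * s)) :
    IsDistFracLap d s Cds (aux_w d s) (fun x => Cds * c * aux_G d x) := by
  intro φ h hcs
  have : Nonempty (Fin d) := ⟨⟨0, hd⟩⟩
  have : Nontrivial (Ed d) := inferInstance
  have hφi : Integrable (fun x => (φ x : ℂ)) :=
    (h.continuous.integrable_of_hasCompactSupport hcs).ofReal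
  have hL : Integrable (fun x => (fracLap d s Cds φ x : ℂ)) :=
    (aux_fracLap_int d hd s hs Cds φ h hcs).ofReal
  have hg : Integrable (fun x => (aux_g d s x : ℂ)) := (aux_g_int d hd s hds).ofReal
  have hG : Integrable (fun x => (aux_G d x : ℂ)) := (aux_G_int d hd).ofReal
  have key : ∫ x, aux_F d (fun ξ => (aux_g d s ξ : ℂ)) x * (fracLap d s Cds φ x : ℂ)
      = ((∫ x, Cds * c * aux_G d x * φ x : ℝ) : ℂ) := by
    rw [aux_F_selfadj d _ _ hg hL, ← integral_complex_ofReal]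
    calc ∫ ξ, (aux_g d s ξ : ℂ) * aux_F d (fun x => (fracLap d s Cds φ x : ℂ)) ξ
        = ∫ ξ, ((Cds * c : ℝ) : ℂ) * ((aux_G d ξ : ℂ) * aux_F d (fun x => (φ x : ℂ)) ξ) := by
          apply integral_congr_ae
          filter_upwards [Measure.ae_ne volume (0 : Ed d)] with ξ hξ
          rw [aux_F_fracLap d hd s hs Cds φ h hcs, hc]
          have h0 : 0 < ‖ξ‖ := norm_pos_iff.2 hξ
          have : ‖ξ‖ ^ (-(2 * s)) * ‖ξ‖ ^ (2 * s) = 1 := by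
            rw [← Real.rpow_add h0]; simp
          have e : aux_g d s ξ * (Cds * (c * ‖ξ‖ ^ (2 * s))) = Cds * c * aux_G d ξ := by
            unfold aux_g
            linear_combination (Cds * c * aux_G d ξ) * this
          rw [← mul_assoc, ← Complex.ofReal_mul, e]
          push_cast; ring
      _ = ((Cds * c : ℝ) : ℂ) * ∫ ξ, (aux_G d ξ : ℂ) * (φ ξ : ℂ) := by
          rw [integral_const_mul, ← aux_F_selfadj d _ _ hG hφi]
          simp_rw [aux_F_G]
      _ = _ := by
          rw [← integral_const_mul]; congr 1; ext ξ; push_cast; ring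
  have hint : Integrable
      (fun x => aux_F d (fun ξ => (aux_g d s ξ : ℂ)) x * (fracLap d s Cds φ x : ℂ)) := by
    obtain ⟨B, hB⟩ := aux_w_bdd d s
    exact hL.bdd_mul (c := B) (aux_w_cont d hd s hds).aestronglyMeasurable
      (Eventually.of_forall hB)
  have h2 := congrArg Complex.re key
  rw [Complex.ofReal_re, ← RCLike.re_eq_complex_re, ← integral_re hint] at h2
  rw [← h2]
  congr 1; ext x
  simp [aux_w]

lemma aux_rho_int (d : ℕ) (hd : 1 ≤ d) (ρ : Ed d → ℝ) (hρpos : ∀ x, 0 < ρ x) (hρm : Measurable ρ)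
    (c C γ₀ γ : ℝ) (hw : TwoPowerWeight d ρ c C γ₀ γ)
    (h1 : γ₀ < d) (h2 : (d:ℝ) < γ) : Integrable ρ := by
  obtain ⟨hc, hcC, ha, hb⟩ := hw
  refine ((aux_env d hd γ₀ γ h1 h2).const_mul C).mono' hρm.aestronglyMeasurable ?_
  filter_upwards [ha, hb] with x hx1 hx2
  rw [Real.norm_of_nonneg (hρpos x).le]
  split_ifs with h
  · exact (hx1 h).2
  · exact (hx2 (not_le.1 h)).2

lemma aux_W_mem (d : ℕ) (hd : 1 ≤ d) (ρ : Ed d → ℝ) (hρpos : ∀ x, 0 < ρ x) (hρm : Measurable ρ)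
    (c C γ₀ γ : ℝ) (hw : TwoPowerWeight d ρ c C γ₀ γ) (hγ₀ : 0 ≤ γ₀) (hγ : 0 ≤ γ)
    (q θ A : ℝ) (hq : 0 < q) (hθ : 0 ≤ θ) (hA : 0 ≤ A) :
    MemWLp d q (fun x => ρ x ^ (-θ)) (fun x => A * aux_G d x) := by
  obtain ⟨hc, hcC, ha, hb⟩ := hw
  have hGm : Measurable (aux_G d) := by unfold aux_G; fun_prop
  have : Nonempty (Fin d) := ⟨⟨0, hd⟩⟩
  have : Nontrivial (Ed d) := inferInstance
  have hd' : (1:ℝ) ≤ d := by exact_mod_cast hd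
  refine ⟨(hGm.const_mul A).aestronglyMeasurable, ?_⟩
  have i1 := (aux_gauss d hd 0 (Real.pi * q) (by linarith) (by positivity)).const_mul
    (A ^ q * c ^ (-θ))
  have hγθ : 0 ≤ γ * θ := by positivity
  have i2 := (aux_gauss d hd (γ * θ) (Real.pi * q) (by linarith) (by positivity)).const_mul
    (A ^ q * c ^ (-θ))
  refine (i1.add i2).mono' ?_ ?_
  · refine Measurable.aestronglyMeasurable ?_
    fun_prop
  · filter_upwards [ha, hb, Measure.ae_ne volume (0 : Ed d)] with x hx1 hx2 hx0
    have h0 : 0 < ‖x‖ := norm_pos_iff.2 hx0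
    have hG0 : 0 < aux_G d x := Real.exp_pos _
    have hρ0 := hρpos x
    have eG : |A * aux_G d x| ^ q = A ^ q * Real.exp (-(Real.pi * q) * ‖x‖ ^ 2) := by
      rw [abs_of_nonneg (by positivity), Real.mul_rpow hA hG0.le]
      unfold aux_G; rw [← Real.exp_mul]; congr 2; ring
    have hr : ρ x ^ (-θ) ≤ c ^ (-θ) * (1 + ‖x‖ ^ (γ * θ)) := by
      rcases le_or_gt ‖x‖ 1 with h | h
      · have hb1 : c ≤ ρ x := by
          refine le_trans ?_ (hx1 h).1
          have := Real.one_le_rpow_of_pos_of_le_one_of_nonpos h0 h (neg_nonpos.2 hγ₀)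
          nlinarith
        have := Real.rpow_le_rpow_of_nonpos hc hb1 (neg_nonpos.2 hθ)
        refine this.trans ?_
        have : 0 ≤ c ^ (-θ) * ‖x‖ ^ (γ * θ) := by positivity
        linarith
      · have hb1 := (hx2 h).1
        have := Real.rpow_le_rpow_of_nonpos (by positivity) hb1 (neg_nonpos.2 hθ)
        refine this.trans ?_
        rw [Real.mul_rpow hc.le (by positivity), ← Real.rpow_mul h0.le, neg_mul_neg]
        have : 0 ≤ c ^ (-θ) := by positivity
        linarith
    show ‖|A * aux_G d x| ^ q * ρ x ^ (-θ)‖ ≤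
      A ^ q * c ^ (-θ) * (‖x‖ ^ (0:ℝ) * Real.exp (-(Real.pi * q) * ‖x‖ ^ 2)) +
      A ^ q * c ^ (-θ) * (‖x‖ ^ (γ * θ) * Real.exp (-(Real.pi * q) * ‖x‖ ^ 2))
    rw [Real.norm_of_nonneg (by positivity), eG, Real.rpow_zero]
    have : 0 ≤ A ^ q * Real.exp (-(Real.pi * q) * ‖x‖ ^ 2) := by positivity
    have := mul_le_mul_of_nonneg_left hr this
    linarith


theorem stmt19 (d : ℕ) (hd : 1 ≤ d) (s : ℝ) (hs : s ∈ Set.Ioo (0:ℝ) 1)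
    (hds : 2 * s < (d:ℝ)) (Cds : ℝ) (hC : 0 < Cds)
    (p : ℝ) (hp1 : 2 ≤ p) (hp2 : p ≤ 2 * d / ((d:ℝ) - 2 * s))
    (ρ : Ed d → ℝ) (hρpos : ∀ x, 0 < ρ x) (hρm : Measurable ρ)
    (c C γ₀ γ : ℝ) (hw : TwoPowerWeight d ρ c C γ₀ γ)
    (hγ₀ : γ₀ ∈ Set.Ico (0:ℝ) d)
    (hγ : γ ∈ Set.Ioc (d:ℝ) ((d:ℝ) + p * s)) :
    ∃ v V w W : Ed d → ℝ,
      MemX d s Cds p ρ v V ∧ MemX d s Cds p ρ w W ∧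
      (∫ x : Ed d, v x * W x) ≠ ∫ x : Ed d, V x * w x := by
  obtain ⟨c', hc', hm⟩ := aux_m_form d hd s hs
  have hρi := aux_rho_int d hd ρ hρpos hρm c C γ₀ γ hw hγ₀.2 hγ.1
  have hd' : (1:ℝ) ≤ d := by exact_mod_cast hd
  have hq : 0 < p / (p - 1) := div_pos (by linarith) (by linarith)
  have hθ : 0 ≤ p / (p - 1) - 1 := by
    rw [sub_nonneg, le_div_iff₀ (by linarith)]; linarith
  refine ⟨fun _ => 1, fun _ => 0, aux_w d s, fun x => Cds * c' * aux_G d x,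
    ⟨⟨aestronglyMeasurable_const, by simpa using hρi⟩, ?_, aestronglyMeasurable_const, ?_⟩,
    ⟨⟨?_, ?_⟩, aux_w_dist d hd s hs hds Cds c' hm, ?_⟩, ?_⟩
  · intro φ h hc
    simpa using aux_int_fracLap d hd s hs Cds φ h hc
  · simp [Real.zero_rpow hq.ne']
  · exact (Complex.continuous_re.comp (aux_w_cont d hd s hds)).aestronglyMeasurable
  · obtain ⟨B, hB⟩ := aux_w_bdd d s
    have hwc : Continuous (aux_w d s) := Complex.continuous_re.comp (aux_w_cont d hd s hds)
    refine hρi.bdd_mul (c := B ^ p) ?_ ?_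
    · exact (hwc.abs.rpow_const fun _ => Or.inr (by linarith)).aestronglyMeasurable
    · refine Eventually.of_forall fun x => ?_
      rw [Real.norm_of_nonneg (by positivity)]
      refine Real.rpow_le_rpow (abs_nonneg _) ((Complex.abs_re_le_norm _).trans (hB x)) (by linarith)
  · exact aux_W_mem d hd ρ hρpos hρm c C γ₀ γ hw hγ₀.1 (by linarith [hγ.1]) _ _ _ hq hθ
      (by positivity)
  · simp only [one_mul, zero_mul, integral_zero]
    rw [integral_const_mul]
    have : 0 < ∫ x, aux_G d x := by
      have hG0 : 0 ≤ aux_G d := fun x => (Real.exp_pos _).le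
      rw [integral_pos_iff_support_of_nonneg hG0 (aux_G_int d hd)]
      have : Function.support (aux_G d) = Set.univ := by
        ext x; simp [aux_G, Real.exp_ne_zero]
      rw [this]; exact isOpen_univ.measure_pos volume Set.univ_nonempty
    positivity
end
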